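/- arXiv:0908.4519 — 2 statements merged into one kernel-verified Lean document; each statement's English description precedes it below -/
import Mathlib

section
/- Fix an integer m ≥ 1, a matrix S as below, and an integer ν ≥ 1. There exist a positive integer k_0 and a constant c > 0, depending only on S, m and ν, with the following property. Let p be a prime and let 𝓕 ∈ 𝔉(S,m) over F_p satisfy s_{0,1}·s_{1,2}⋯s_{m−1,m} ≠ 0, with iterated polynomials F_i^{(k)} (obtained by applying the same system 𝓕 at every step). Then for any integer vectors k = (k_1,…,k_ν) and l = (l_1,…,l_ν) with min{k_1,…,k_ν,l_1,…,l_ν} ≥ k_0 whose components are not permutations of each other, and any integer vector a = (a_0,…,a_{m−1}) with gcd(a_0,…,a_{m−1},p) = 1, the polynomial F_{a,k,l} = Σ_{i=0}^{m−1} a_i Σ_{h=1}^{ν} (F_i^{(k_h)} − F_i^{(l_h)}) satisfies |Σ_{w_0,…,w_m=1}^{p} e_p(F_{a,k,l}(w_0,…,w_m))| ≤ c·K^m·p^m, where K = max{k_1,…,k_ν,l_1,…,l_ν}. -/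
open MvPolynomial

/-- Membership of a polynomial system `F = (F_0, …, F_m)` over `R` in the class `𝔉(S,m)`,
where `s i j` records the entries of the upper triangular matrix `S` (for `i < j`). -/
def IsFSystem {R : Type*} [CommRing R] (m : ℕ) (s : ℕ → ℕ → ℕ)
    (F : Fin (m + 1) → MvPolynomial (Fin (m + 1)) R) : Prop :=
  (∃ g h : R, g ≠ 0 ∧
      F (Fin.last m) = MvPolynomial.C g * MvPolynomial.X (Fin.last m) + MvPolynomial.C h) ∧
  ∀ i : Fin (m + 1), (i : ℕ) < m →
    ∃ (G H Gt : MvPolynomial (Fin (m + 1)) R) (g : R),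
      g ≠ 0 ∧
      F i = MvPolynomial.X i * G + H ∧
      (∀ d ∈ G.support, ∀ j : Fin (m + 1), j ≤ i → d j = 0) ∧
      (∀ d ∈ H.support, ∀ j : Fin (m + 1), j ≤ i → d j = 0) ∧
      G = MvPolynomial.C g *
          (∏ j ∈ Finset.univ.filter (fun j : Fin (m + 1) => i < j),
            MvPolynomial.X j ^ s i.val j.val) + Gt ∧
      (∀ d ∈ Gt.support, ∀ j : Fin (m + 1), i < j → d j < s i.val j.val) ∧
      (∀ d ∈ H.support, ∀ j : Fin (m + 1), i < j → d j ≤ s i.val j.val)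

/-- The iterated polynomials `F_i^{(k)}` of a sequence of polynomial systems:
`F_i^{(0)} = X_i` and `F_i^{(k)} = F_{k,i}(F_0^{(k-1)}, …, F_m^{(k-1)})`. -/
noncomputable def iterSys {R : Type*} [CommRing R] (m : ℕ)
    (Fs : ℕ → Fin (m + 1) → MvPolynomial (Fin (m + 1)) R) :
    ℕ → Fin (m + 1) → MvPolynomial (Fin (m + 1)) R
  | 0 => fun i => MvPolynomial.X i
  | k + 1 => fun i => MvPolynomial.bind₁ (iterSys m Fs k) (Fs (k + 1) i)

/-- The additive character `e_p(z) = exp(2πiz/p)` evaluated at an element of `F_p`. -/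
noncomputable def eP (p : ℕ) (x : ZMod p) : ℂ :=
  Complex.exp (2 * Real.pi * Complex.I * (x.val : ℂ) / (p : ℂ))

/-- `e_M(z) = exp(2πiz/M)` for a natural number `z`. -/
noncomputable def eM (M z : ℕ) : ℂ :=
  Complex.exp (2 * Real.pi * Complex.I * (z : ℂ) / (M : ℂ))

/-- The discrepancy of the first `N` points of a sequence in `[0,1)^s`: the supremum over
boxes `B = [a_1,b_1) × ⋯ × [a_s,b_s) ⊆ [0,1)^s` of `|T(B)/N - vol B|`. -/
noncomputable def discrepancy (s N : ℕ) (P : ℕ → Fin s → ℝ) : ℝ :=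
  sSup {D : ℝ | ∃ a b : Fin s → ℝ,
    (∀ j, 0 ≤ a j ∧ a j ≤ b j ∧ b j ≤ 1) ∧
    D = |(((Finset.range N).filter fun n => ∀ j, a j ≤ P n j ∧ P n j < b j).card : ℝ) / N -
        ∏ j, (b j - a j)|}


/-- Simplified data on the components of a system. -/
def SysData {R : Type*} [CommRing R] (m T : ℕ)
    (F : Fin (m + 1) → MvPolynomial (Fin (m + 1)) R)
    (G H : Fin (m + 1) → MvPolynomial (Fin (m + 1)) R) : Prop :=
  ∀ i : Fin (m + 1),
    G i ≠ 0 ∧ F i = X i * G i + H i ∧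
    (∀ d ∈ (G i).support, ∀ j : Fin (m + 1), j ≤ i → d j = 0) ∧
    (∀ d ∈ (H i).support, ∀ j : Fin (m + 1), j ≤ i → d j = 0) ∧
    (∀ d ∈ (G i).support, ∑ j, d j ≤ T) ∧
    (∀ d ∈ (H i).support, ∑ j, d j ≤ T) ∧
    ((i : ℕ) < m → ∀ c : R, G i ≠ C c)

theorem sysData_of_isFSystem {R : Type*} [CommRing R] (m : ℕ) (s : ℕ → ℕ → ℕ)
    (F : Fin (m + 1) → MvPolynomial (Fin (m + 1)) R) (hF : IsFSystem m s F)
    (hs : (∏ i ∈ Finset.range m, s i (i + 1)) ≠ 0) :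
    ∃ G H, SysData m (∑ i : Fin (m + 1), ∑ j : Fin (m + 1), s i.val j.val) F G H := by
  have key : ∀ i : Fin (m + 1), ∃ G H : MvPolynomial (Fin (m + 1)) R,
      G ≠ 0 ∧ F i = X i * G + H ∧
      (∀ d ∈ G.support, ∀ j : Fin (m + 1), j ≤ i → d j = 0) ∧
      (∀ d ∈ H.support, ∀ j : Fin (m + 1), j ≤ i → d j = 0) ∧
      (∀ d ∈ G.support, ∑ j, d j ≤ ∑ i : Fin (m + 1), ∑ j : Fin (m + 1), s i.val j.val) ∧
      (∀ d ∈ H.support, ∑ j, d j ≤ ∑ i : Fin (m + 1), ∑ j : Fin (m + 1), s i.val j.val) ∧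
      ((i : ℕ) < m → ∀ c : R, G ≠ C c) := by
    intro i
    rcases lt_or_ge (i : ℕ) m with him | him
    · obtain ⟨G, H, Gt, g, hg, hFi, hG, hH, hGeq, hGt, hHd⟩ := hF.2 i him
      set e : Fin (m + 1) →₀ ℕ :=
        Finsupp.equivFunOnFinite.symm (fun j => if i < j then s i.val j.val else 0) with he
      have hprod : (∏ j ∈ Finset.univ.filter (fun j : Fin (m + 1) => i < j),
            (X j : MvPolynomial (Fin (m + 1)) R) ^ s i.val j.val) = monomial e 1 := by
        rw [monomial_eq, Finsupp.prod_fintype _ _ (by simp), Finset.prod_filter]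
        simp only [map_one, one_mul]
        refine Finset.prod_congr rfl fun j _ => ?_
        simp only [he, Finsupp.equivFunOnFinite_symm_apply_apply]
        split_ifs <;> simp
      let i1 : Fin (m + 1) := ⟨i + 1, by omega⟩
      have hi1 : i < i1 := by simp [i1, Fin.lt_def]
      have he1 : e i1 = s i.val (i.val + 1) := by
        simp [he, hi1, i1]
      have hs1 : s i.val (i.val + 1) ≠ 0 := by
        rw [Finset.prod_ne_zero_iff] at hs
        exact hs _ (by simpa using him)
      have hcGt : coeff e Gt = 0 := by
        by_contra h
        have := hGt e (mem_support_iff.2 h) i1 hi1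
        rw [he1] at this
        simp [i1] at this
      have hcG : coeff e G = g := by
        rw [hGeq, coeff_add, hcGt, hprod, coeff_C_mul]
        simp
      have hbG : ∀ d ∈ G.support, ∀ j, i < j → d j ≤ s i.val j.val := by
        intro d hd j hj
        by_cases hde : d = e
        · subst hde
          simp [he, hj]
        · refine (hGt d ?_ j hj).le
          rw [mem_support_iff] at hd ⊢
          rw [hGeq, coeff_add, hprod, coeff_C_mul, coeff_monomial, if_neg (Ne.symm hde)] at hd
          simpa using hd
      have tot : ∀ d : Fin (m + 1) →₀ ℕ, (∀ j : Fin (m + 1), j ≤ i → d j = 0) →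
          (∀ j, i < j → d j ≤ s i.val j.val) →
          ∑ j, d j ≤ ∑ i : Fin (m + 1), ∑ j : Fin (m + 1), s i.val j.val := by
        intro d h1 h2
        calc ∑ j, d j ≤ ∑ j : Fin (m + 1), s i.val j.val := by
              refine Finset.sum_le_sum fun j _ => ?_
              rcases le_or_gt j i with h | h
              · simp [h1 j h]
              · exact h2 j h
          _ ≤ _ := Finset.single_le_sum
              (f := fun i : Fin (m + 1) => ∑ j : Fin (m + 1), s i.val j.val)
              (fun _ _ => Nat.zero_le _) (Finset.mem_univ i)
      refine ⟨G, H, ?_, hFi, hG, hH, fun d hd => tot d (hG d hd) (hbG d hd),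
        fun d hd => tot d (hH d hd) (hHd d hd), ?_⟩
      · rintro rfl
        simp at hcG
        exact hg hcG.symm
      · rintro - c rfl
        rw [coeff_C, if_neg] at hcG
        · exact hg hcG.symm
        · intro h0
          rw [← h0] at he1
          exact hs1 he1.symm
    · obtain ⟨g, h, hg, hFm⟩ := hF.1
      have hi : i = Fin.last m := by
        apply Fin.ext; simp; omega
      subst hi
      have hsup : ∀ (a : R), ∀ d ∈ (C a : MvPolynomial (Fin (m + 1)) R).support, d = 0 := by
        intro a d hd
        rw [mem_support_iff, coeff_C] at hd
        by_contra hne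
        exact hd (if_neg (Ne.symm hne))
      refine ⟨C g, C h, ?_, ?_, ?_, ?_, ?_, ?_, ?_⟩
      · simpa using hg
      · rw [hFm]; ring
      · intro d hd j _; simp [hsup _ d hd]
      · intro d hd j _; simp [hsup _ d hd]
      · intro d hd; simp [hsup _ d hd]
      · intro d hd; simp [hsup _ d hd]
      · intro h; simp at h
  choose G H hGH using key
  exact ⟨G, H, hGH⟩

section inj
variable {R : Type*} [CommRing R] [IsDomain R] {m : ℕ}

theorem sys_degree {T : ℕ} {F G H : Fin (m + 1) → MvPolynomial (Fin (m + 1)) R}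
    (h : SysData m T F G H) (i : Fin (m + 1)) :
    F i ≠ 0 ∧ (∀ j < i, (MonomialOrder.lex (σ := Fin (m + 1))).degree (F i) j = 0) ∧
      (MonomialOrder.lex (σ := Fin (m + 1))).degree (F i) i = 1 := by
  obtain ⟨hG0, hF, hG, hH, -, -, -⟩ := h i
  set o := MonomialOrder.lex (σ := Fin (m + 1))
  have hX : (X i : MvPolynomial (Fin (m + 1)) R) ≠ 0 := X_ne_zero i
  have hd1 : o.degree (X i * G i) = Finsupp.single i 1 + o.degree (G i) := by
    rw [o.degree_mul hX hG0, o.degree_X]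
  have hGd := hG _ (o.degree_mem_support hG0)
  have hlt : o.toSyn (o.degree (H i)) < o.toSyn (o.degree (X i * G i)) := by
    rw [hd1]
    by_cases hH0 : H i = 0
    · rw [hH0, o.degree_zero, map_zero, o.toSyn_lt_iff_ne_zero]
      intro h0
      rw [o.toSyn_eq_zero_iff] at h0
      have := DFunLike.congr_fun h0 i
      simp at this
    · have hHd := hH _ (o.degree_mem_support hH0)
      rw [MonomialOrder.lex_lt_iff]
      refine Finsupp.lex_def.2 ⟨i, ?_, ?_⟩
      · intro j hj
        simp [hHd j hj.le, hGd j hj.le, hj.ne']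
      · simp [hHd i le_rfl]
  have hdF : o.degree (F i) = Finsupp.single i 1 + o.degree (G i) := by
    rw [hF, o.degree_add_of_lt hlt, hd1]
  refine ⟨?_, ?_, ?_⟩
  · apply o.ne_zero_of_degree_ne_zero
    rw [hdF]
    intro h0
    have := DFunLike.congr_fun h0 i
    simp at this
  · intro j hj
    simp [hdF, hGd j hj.le, hj.ne']
  · simp [hdF, hGd i le_rfl]

theorem exps_inj (e : Fin (m + 1) → Fin (m + 1) → ℕ) (h0 : ∀ i, ∀ j < i, e i j = 0)
    (h1 : ∀ i, e i i = 1) (d d' : Fin (m + 1) → ℕ)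
    (h : ∀ j, ∑ i, d i * e i j = ∑ i, d' i * e i j) : d = d' := by
  have : ∀ n : ℕ, ∀ j : Fin (m + 1), j.val = n → d j = d' j := by
    intro n
    induction n using Nat.strong_induction_on with
    | _ n ih =>
      intro j hj
      have hh := h j
      rw [← Finset.add_sum_erase _ _ (Finset.mem_univ j),
        ← Finset.add_sum_erase (a := j) _ (fun i => d' i * e i j) (Finset.mem_univ j), h1] at hh
      have : ∑ i ∈ Finset.univ.erase j, d i * e i j = ∑ i ∈ Finset.univ.erase j, d' i * e i j := by
        refine Finset.sum_congr rfl fun i hi => ?_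
        rcases lt_or_gt_of_ne (Finset.ne_of_mem_erase hi) with hl | hl
        · rw [ih i.val (by have := Fin.lt_def.1 hl; omega) i rfl]
        · simp [h0 i j hl]
      rw [this] at hh
      omega
  funext j
  exact this _ j rfl

theorem bind_inj {T : ℕ} {F G H : Fin (m + 1) → MvPolynomial (Fin (m + 1)) R}
    (h : SysData m T F G H) : Function.Injective (bind₁ F) := by
  rw [injective_iff_map_eq_zero]
  intro Q hQ
  by_contra hQ0
  set o := MonomialOrder.lex (σ := Fin (m + 1))
  let M : (Fin (m + 1) →₀ ℕ) → (Fin (m + 1) →₀ ℕ) := fun d => ∑ i, d i • o.degree (F i)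
  have hMinj : Function.Injective M := by
    intro d d' hdd
    apply DFunLike.coe_injective
    refine exps_inj (fun i j => o.degree (F i) j) (fun i => (sys_degree h i).2.1)
      (fun i => (sys_degree h i).2.2) d d' fun j => ?_
    have := DFunLike.congr_fun hdd j
    simpa [M, Finsupp.finsetSum_apply] using this
  have hne : ∀ d : Fin (m + 1) →₀ ℕ, ∀ i, F i ^ d i ≠ 0 := fun d i =>
    pow_ne_zero _ (sys_degree h i).1
  have hdeg : ∀ d : Fin (m + 1) →₀ ℕ, o.degree (∏ i, F i ^ d i) = M d := by
    intro d
    rw [o.degree_prod (fun i _ => hne d i)]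
    simp [M, o.degree_pow]
  obtain ⟨d, hd, hmax⟩ := Finset.exists_max_image Q.support (fun d => o.toSyn (M d))
    (support_nonempty.2 hQ0)
  have hexp : bind₁ F Q = ∑ d ∈ Q.support, C (coeff d Q) * ∏ i, F i ^ d i := by
    rw [bind₁, aeval_def, eval₂_eq']
    rfl
  have hc : coeff (M d) (bind₁ F Q) = coeff d Q * coeff (M d) (∏ i, F i ^ d i) := by
    rw [hexp, coeff_sum, Finset.sum_eq_single d]
    · rw [coeff_C_mul]
    · intro d' hd' hdd
      rw [coeff_C_mul, o.coeff_eq_zero_of_lt (f := ∏ i, F i ^ d' i), mul_zero]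
      rw [hdeg]
      refine lt_of_le_of_ne (hmax d' hd') fun heq => hdd (hMinj (o.toSyn.injective heq))
    · intro hh; exact absurd hd hh
  rw [hQ, coeff_zero, eq_comm, mul_eq_zero] at hc
  rcases hc with hc | hc
  · exact mem_support_iff.1 hd hc
  · rw [← hdeg d, o.coeff_degree_eq_zero_iff] at hc
    exact Finset.prod_ne_zero_iff.2 (fun i _ => hne d i) hc

theorem bind_iter_inj {T : ℕ} {F G H : Fin (m + 1) → MvPolynomial (Fin (m + 1)) R}
    (h : SysData m T F G H) (k : ℕ) :
    Function.Injective (bind₁ (iterSys m (fun _ => F) k)) := by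
  induction k with
  | zero =>
    have : iterSys m (fun _ => F) 0 = X := by funext i; rfl
    rw [this, bind₁_X_left]
    exact Function.injective_id
  | succ k ih =>
    have : bind₁ (iterSys m (fun _ => F) (k + 1)) =
        (bind₁ (iterSys m (fun _ => F) k)).comp (bind₁ F) := by
      apply algHom_ext
      intro i
      simp [iterSys]
    rw [this]
    exact ih.comp (bind_inj h)

/-- The coefficient of `X_r` in the `k`-th iterate. -/
noncomputable def cf (F G : Fin (m + 1) → MvPolynomial (Fin (m + 1)) R)
    (r : Fin (m + 1)) (k : ℕ) : MvPolynomial (Fin (m + 1)) R :=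
  ∏ j ∈ Finset.range k, bind₁ (iterSys m (fun _ => F) j) (G r)

theorem cf_ne_zero {T : ℕ} {F G H : Fin (m + 1) → MvPolynomial (Fin (m + 1)) R}
    (h : SysData m T F G H) (r : Fin (m + 1)) (k : ℕ) : cf F G r k ≠ 0 := by
  refine Finset.prod_ne_zero_iff.2 fun j _ => ?_
  rw [Ne, ← (bind₁ (iterSys m (fun _ => F) j)).map_zero]
  exact fun hh => (h r).1 (bind_iter_inj h j hh)

theorem cf_deg_strictMono {T : ℕ} {F G H : Fin (m + 1) → MvPolynomial (Fin (m + 1)) R}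
    (h : SysData m T F G H) (r : Fin (m + 1)) (hr : r.val < m) :
    StrictMono fun k => (cf F G r k).totalDegree := by
  refine strictMono_nat_of_lt_succ fun k => ?_
  have hs : cf F G r (k + 1) = cf F G r k * bind₁ (iterSys m (fun _ => F) k) (G r) := by
    simp [cf, Finset.prod_range_succ]
  have h0 := cf_ne_zero h r (k + 1)
  rw [hs] at h0
  show _ < (cf F G r (k + 1)).totalDegree
  rw [hs, totalDegree_mul_of_isDomain (left_ne_zero_of_mul h0) (right_ne_zero_of_mul h0)]
  have : (bind₁ (iterSys m (fun _ => F) k) (G r)).totalDegree ≠ 0 := by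
    intro hh
    rw [totalDegree_eq_zero_iff_eq_C] at hh
    set c := coeff 0 (bind₁ (iterSys m (fun _ => F) k) (G r))
    have h2 : bind₁ (iterSys m (fun _ => F) k) (C c) = C c := by simp
    rw [← h2] at hh
    exact (h r).2.2.2.2.2.2 hr c (bind_iter_inj h k hh)
  omega

end inj

section deg
variable {R : Type*} [CommRing R] {m : ℕ}

theorem totalDegree_bind_le (f : Fin (m + 1) → MvPolynomial (Fin (m + 1)) R)
    (Q : MvPolynomial (Fin (m + 1)) R) (i : Fin (m + 1)) (T B : ℕ)
    (h0 : ∀ d ∈ Q.support, ∀ j : Fin (m + 1), j ≤ i → d j = 0)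
    (hT : ∀ d ∈ Q.support, ∑ j, d j ≤ T)
    (hB : ∀ j, i < j → (f j).totalDegree ≤ B) :
    (bind₁ f Q).totalDegree ≤ T * B := by
  have hexp : bind₁ f Q = ∑ d ∈ Q.support, C (coeff d Q) * ∏ i, f i ^ d i := by
    rw [bind₁, aeval_def, eval₂_eq']
    rfl
  rw [hexp]
  refine totalDegree_finsetSum_le fun d hd => ?_
  refine (totalDegree_mul _ _).trans ?_
  rw [totalDegree_C, zero_add]
  refine (totalDegree_finsetProd _ _).trans ?_
  calc ∑ j, (f j ^ d j).totalDegree ≤ ∑ j, d j * B := by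
        refine Finset.sum_le_sum fun j _ => ?_
        rcases le_or_gt j i with hj | hj
        · simp [h0 d hd j hj]
        · exact (totalDegree_pow _ _).trans (Nat.mul_le_mul_left _ (hB j hj))
    _ = (∑ j, d j) * B := by rw [Finset.sum_mul]
    _ ≤ T * B := Nat.mul_le_mul_right _ (hT d hd)

theorem iter_succ {T : ℕ} {F G H : Fin (m + 1) → MvPolynomial (Fin (m + 1)) R}
    (h : SysData m T F G H) (k : ℕ) (i : Fin (m + 1)) :
    iterSys m (fun _ => F) (k + 1) i =
      iterSys m (fun _ => F) k i * bind₁ (iterSys m (fun _ => F) k) (G i) +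
        bind₁ (iterSys m (fun _ => F) k) (H i) := by
  show bind₁ (iterSys m (fun _ => F) k) (F i) = _
  conv_lhs => rw [(h i).2.1]
  simp

theorem totalDegree_X_le (i : Fin (m + 1)) :
    (X i : MvPolynomial (Fin (m + 1)) R).totalDegree ≤ 1 := by
  have := totalDegree_monomial_le (Finsupp.single i 1) (1 : R)
  rw [Finsupp.sum_single_index rfl] at this
  exact this

theorem iter_deg {T : ℕ} {F G H : Fin (m + 1) → MvPolynomial (Fin (m + 1)) R}
    (h : SysData m T F G H) (n : ℕ) : ∀ i : Fin (m + 1), m - i.val ≤ n → ∀ k : ℕ,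
    (iterSys m (fun _ => F) k i).totalDegree ≤ (1 + T) ^ n * (k + 1) ^ n := by
  induction n with
  | zero =>
    intro i hi k
    have hlast : ∀ j : Fin (m + 1), ¬ i < j := by
      intro j hj
      have := Fin.lt_def.1 hj
      omega
    obtain ⟨-, -, h1, h2, h3, h4, -⟩ := h i
    induction k with
    | zero => simpa [iterSys] using totalDegree_X_le (R := R) i
    | succ k ihk =>
      rw [iter_succ h]
      have a1 := totalDegree_bind_le (iterSys m (fun _ => F) k) (G i) i T 0 h1 h3
        (fun j hj => absurd hj (hlast j))
      have a2 := totalDegree_bind_le (iterSys m (fun _ => F) k) (H i) i T 0 h2 h4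
        (fun j hj => absurd hj (hlast j))
      refine (totalDegree_add _ _).trans (max_le ((totalDegree_mul _ _).trans ?_) ?_)
      · simp at *; omega
      · simp at *; omega
  | succ n ih =>
    intro i hi k
    obtain ⟨-, -, h1, h2, h3, h4, -⟩ := h i
    induction k with
    | zero =>
      refine le_trans (totalDegree_X_le i) ?_
      have : 0 < (1 + T) ^ (n + 1) * (0 + 1) ^ (n + 1) := by positivity
      omega
    | succ k ihk =>
      rw [iter_succ h]
      have hb : ∀ j, i < j → (iterSys m (fun _ => F) k j).totalDegree ≤
          (1 + T) ^ n * (k + 1) ^ n := by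
        intro j hj
        have := Fin.lt_def.1 hj
        exact ih j (by omega) k
      have a1 := totalDegree_bind_le (iterSys m (fun _ => F) k) (G i) i T _ h1 h3 hb
      have a2 := totalDegree_bind_le (iterSys m (fun _ => F) k) (H i) i T _ h2 h4 hb
      have main : (1 + T) ^ (n + 1) * (k + 1) ^ (n + 1) + T * ((1 + T) ^ n * (k + 1) ^ n) ≤
          (1 + T) ^ (n + 1) * (k + 1 + 1) ^ (n + 1) := by
        calc _ ≤ (1 + T) ^ (n + 1) * (k + 1) ^ (n + 1) +
              (1 + T) * ((1 + T) ^ n * (k + 1) ^ n) := by gcongr; omega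
          _ = (1 + T) ^ (n + 1) * ((k + 1) ^ n * (k + 1 + 1)) := by ring
          _ ≤ (1 + T) ^ (n + 1) * ((k + 1 + 1) ^ n * (k + 1 + 1)) := by gcongr; omega
          _ = _ := by ring
      refine (totalDegree_add _ _).trans (max_le ((totalDegree_mul _ _).trans ?_) ?_)
      · omega
      · omega

/-- Evaluations depend only on the variables that occur. -/
theorem eval_congr_gt (Q : MvPolynomial (Fin (m + 1)) R) (i : Fin (m + 1))
    (h0 : ∀ d ∈ Q.support, ∀ j : Fin (m + 1), j ≤ i → d j = 0)
    (w w' : Fin (m + 1) → R) (hw : ∀ j, i < j → w j = w' j) : eval w Q = eval w' Q := by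
  rw [eval_eq', eval_eq']
  refine Finset.sum_congr rfl fun d hd => ?_
  congr 1
  refine Finset.prod_congr rfl fun j _ => ?_
  rcases le_or_gt j i with hj | hj
  · simp [h0 d hd j hj]
  · rw [hw j hj]

theorem eval_bind (w : Fin (m + 1) → R) (f : Fin (m + 1) → MvPolynomial (Fin (m + 1)) R)
    (Q : MvPolynomial (Fin (m + 1)) R) :
    eval w (bind₁ f Q) = eval (fun j => eval w (f j)) Q := by
  simp only [eval, eval₂Hom_bind₁]

theorem iter_eval_gt {T : ℕ} {F G H : Fin (m + 1) → MvPolynomial (Fin (m + 1)) R}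
    (h : SysData m T F G H) (k : ℕ) (i r : Fin (m + 1)) (hri : r < i)
    (w : Fin (m + 1) → R) (t : R) :
    eval (w + Pi.single r t) (iterSys m (fun _ => F) k i) =
      eval w (iterSys m (fun _ => F) k i) := by
  induction k generalizing i with
  | zero => simp [iterSys, hri.ne']
  | succ k ih =>
    rw [iter_succ h]
    obtain ⟨-, -, h1, h2, -, -, -⟩ := h i
    simp only [map_add, map_mul, eval_bind]
    rw [ih i hri, eval_congr_gt (G i) i h1 _ _ (fun j hj => ih j (hri.trans hj)),
      eval_congr_gt (H i) i h2 _ _ (fun j hj => ih j (hri.trans hj))]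

end deg

theorem iter_eval_eq {R : Type*} [CommRing R] [IsDomain R] {m : ℕ} {T : ℕ}
    {F G H : Fin (m + 1) → MvPolynomial (Fin (m + 1)) R}
    (h : SysData m T F G H) (k : ℕ) (r : Fin (m + 1))
    (w : Fin (m + 1) → R) (t : R) :
    eval (w + Pi.single r t) (iterSys m (fun _ => F) k r) =
      eval w (iterSys m (fun _ => F) k r) + t * eval w (cf F G r k) := by
  induction k with
  | zero => simp [iterSys, cf]
  | succ k ih =>
    rw [iter_succ h]
    obtain ⟨-, -, h1, h2, -, -, -⟩ := h r
    have hs : cf F G r (k + 1) = cf F G r k * bind₁ (iterSys m (fun _ => F) k) (G r) := by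
      simp [cf, Finset.prod_range_succ]
    simp only [hs, map_add, map_mul, eval_bind]
    rw [ih, eval_congr_gt (G r) r h1 _ _ (fun j hj => iter_eval_gt h k j r hj w t),
      eval_congr_gt (H r) r h2 _ _ (fun j hj => iter_eval_gt h k j r hj w t)]
    ring

theorem cf_deg {R : Type*} [CommRing R] [IsDomain R] {m : ℕ} {T : ℕ}
    {F G H : Fin (m + 1) → MvPolynomial (Fin (m + 1)) R}
    (h : SysData m T F G H) (k K : ℕ) (hk : k ≤ K) (r : Fin (m + 1)) (hm : 1 ≤ m) :
    (cf F G r k).totalDegree ≤ (1 + T) ^ m * K ^ m := by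
  obtain ⟨n, rfl⟩ : ∃ n, m = n + 1 := ⟨m - 1, by omega⟩
  obtain ⟨-, -, h1, h2, h3, h4, -⟩ := h r
  refine (totalDegree_finsetProd _ _).trans ?_
  calc _ ≤ ∑ j ∈ Finset.range k, T * ((1 + T) ^ n * K ^ n) := by
        refine Finset.sum_le_sum fun j hj => ?_
        refine totalDegree_bind_le _ _ r T _ h1 h3 fun i hi => ?_
        have := Fin.lt_def.1 hi
        refine (iter_deg h n i (by omega) j).trans ?_
        have := Finset.mem_range.1 hj
        gcongr
        omega
    _ = k * (T * ((1 + T) ^ n * K ^ n)) := by simp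
    _ ≤ K * ((1 + T) * ((1 + T) ^ n * K ^ n)) := by gcongr; omega
    _ = _ := by ring

theorem eP_eq (p : ℕ) [NeZero p] (x : ZMod p) : eP p x = ZMod.stdAddChar x := by
  rw [ZMod.stdAddChar_apply, ZMod.toCircle_apply]
  rfl

theorem zeros_card_le {m p : ℕ} [Fact p.Prime]
    (P : MvPolynomial (Fin (m + 1)) (ZMod p)) (hP : P ≠ 0)
    (Z : Finset (Fin (m + 1) → ZMod p)) (hZ : ∀ w ∈ Z, eval w P = 0) :
    (Z.card : ℝ) ≤ P.totalDegree * (p : ℝ) ^ m := by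
  classical
  have sz := schwartz_zippel_totalDegree hP (Finset.univ : Finset (ZMod p))
  have hpq : (0 : ℚ≥0) < p := by exact_mod_cast (Fact.out : p.Prime).pos
  rw [Finset.card_univ, ZMod.card, div_le_div_iff₀ (by positivity) hpq, pow_succ, ← mul_assoc] at sz
  have sz2 := le_of_mul_le_mul_right sz hpq
  have sz3 : (Finset.filter (fun f => eval f P = 0)
      (Fintype.piFinset fun _ => (Finset.univ : Finset (ZMod p)))).card ≤
      P.totalDegree * p ^ m := by exact_mod_cast sz2
  have hle : Z.card ≤ P.totalDegree * p ^ m :=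
    (Finset.card_le_card fun w hw => Finset.mem_filter.2
      ⟨Fintype.mem_piFinset.2 fun _ => Finset.mem_univ _, hZ w hw⟩).trans sz3
  exact_mod_cast hle

theorem char_sum_aux {p : ℕ} [Fact p.Prime] {V : Type*} [Fintype V] [AddCommGroup V]
    (f : V → ZMod p) (q : V → ZMod p) (u : ZMod p → V)
    (hf : ∀ w t, f (w + u t) = f w + t * q w) :
    ∃ Z : Finset V, (∀ w ∈ Z, q w = 0) ∧ ‖∑ w, eP p (f w)‖ ≤ Z.card := by
  classical
  have hp0 : (p : ℂ) ≠ 0 := by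
    exact_mod_cast (Fact.out : p.Prime).ne_zero
  have h1 : ∀ t : ZMod p, ∑ w, eP p (f w) = ∑ w, eP p (f (w + u t)) := fun t =>
    (Equiv.sum_comp (Equiv.addRight (u t)) (fun w => eP p (f w))).symm
  have h2 : (p : ℂ) * ∑ w, eP p (f w) =
      p * ∑ w, if q w = 0 then eP p (f w) else 0 := by
    calc (p : ℂ) * ∑ w, eP p (f w) = ∑ _t : ZMod p, ∑ w, eP p (f w) := by
          rw [Finset.sum_const, Finset.card_univ, ZMod.card, nsmul_eq_mul]
      _ = ∑ t : ZMod p, ∑ w, eP p (f (w + u t)) :=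
          Finset.sum_congr rfl fun t _ => h1 t
      _ = ∑ w, ∑ t : ZMod p, eP p (f w) * ZMod.stdAddChar (t * q w) := by
          rw [Finset.sum_comm]
          refine Finset.sum_congr rfl fun w _ => Finset.sum_congr rfl fun t _ => ?_
          rw [hf, eP_eq, eP_eq, AddChar.map_add_eq_mul]
      _ = _ := by
          rw [Finset.mul_sum]
          refine Finset.sum_congr rfl fun w _ => ?_
          rw [← Finset.mul_sum, AddChar.sum_mulShift _ (ZMod.isPrimitive_stdAddChar p), ZMod.card]
          split_ifs
          · rw [mul_comm]
          · simp
  refine ⟨Finset.univ.filter fun w => q w = 0, fun w hw => (Finset.mem_filter.1 hw).2, ?_⟩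
  rw [mul_left_cancel₀ hp0 h2, ← Finset.sum_filter]
  refine (norm_sum_le _ _).trans ?_
  rw [Finset.card_eq_sum_ones, Nat.cast_sum]
  refine Finset.sum_le_sum fun w _ => ?_
  rw [eP_eq, AddChar.norm_apply]
  simp

theorem char_sum_bound {m p : ℕ} [Fact p.Prime] (f : (Fin (m + 1) → ZMod p) → ZMod p)
    (P : MvPolynomial (Fin (m + 1)) (ZMod p)) (hP : P ≠ 0) (r : Fin (m + 1))
    (a : ZMod p) (ha : a ≠ 0)
    (hf : ∀ w t, f (w + Pi.single r t) = f w + t * (a * eval w P)) :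
    ‖∑ w, eP p (f w)‖ ≤ P.totalDegree * (p : ℝ) ^ m := by
  obtain ⟨Z, hZ, hle⟩ := char_sum_aux f (fun w => a * eval w P) (fun t => Pi.single r t) hf
  exact hle.trans (zeros_card_le P hP Z fun w hw => (mul_eq_zero.1 (hZ w hw)).resolve_left ha)

theorem comb_ne_zero {p : ℕ} [Fact p.Prime] {σ : Type*} (ν : ℕ) (hν : ν < p)
    (g : ℕ → MvPolynomial σ (ZMod p)) (hg : ∀ n, g n ≠ 0)
    (hmono : StrictMono fun n => (g n).totalDegree) (k l : Fin ν → ℕ)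
    (hkl : ¬ ∃ σ : Equiv.Perm (Fin ν), ∀ h, k h = l (σ h)) :
    ∑ h, (g (k h) - g (l h)) ≠ 0 := by
  classical
  set N := Finset.univ.sup k ⊔ Finset.univ.sup l with hN
  have hkN : ∀ h, k h ∈ Finset.range (N + 1) := fun h => by
    have := (Finset.le_sup (f := k) (Finset.mem_univ h)).trans (le_sup_left (b := Finset.univ.sup l))
    simp; omega
  have hlN : ∀ h, l h ∈ Finset.range (N + 1) := fun h => by
    have := (Finset.le_sup (f := l) (Finset.mem_univ h)).trans (le_sup_right (a := Finset.univ.sup k))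
    simp; omega
  let A : ℕ → ℕ := fun n => (Finset.univ.filter fun h => k h = n).card
  let B : ℕ → ℕ := fun n => (Finset.univ.filter fun h => l h = n).card
  have hA : ∀ n, A n ≤ ν := fun n => (Finset.card_le_univ _).trans (by simp)
  have hB : ∀ n, B n ≤ ν := fun n => (Finset.card_le_univ _).trans (by simp)
  have hAs : ∀ k : Fin ν → ℕ, (∀ h, k h ∈ Finset.range (N + 1)) →
      ∑ h, g (k h) = ∑ n ∈ Finset.range (N + 1),
        C (((Finset.univ.filter fun h => k h = n).card : ZMod p)) * g n := by
    intro k hk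
    rw [← Finset.sum_fiberwise_of_maps_to (fun h _ => hk h)]
    refine Finset.sum_congr rfl fun n _ => ?_
    rw [Finset.sum_congr rfl (g := fun _ => g n) (fun h hh => by rw [(Finset.mem_filter.1 hh).2])]
    simp
  have hsum : ∑ h, (g (k h) - g (l h)) =
      ∑ n ∈ Finset.range (N + 1), C ((A n : ZMod p) - B n) * g n := by
    rw [Finset.sum_sub_distrib, hAs k hkN, hAs l hlN, ← Finset.sum_sub_distrib]
    refine Finset.sum_congr rfl fun n _ => ?_
    rw [map_sub, sub_mul]
  have hex : ((Finset.range (N + 1)).filter fun n => A n ≠ B n).Nonempty := by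
    by_contra hne
    rw [Finset.not_nonempty_iff_eq_empty, Finset.filter_eq_empty_iff] at hne
    have heq : ∀ n, A n = B n := by
      intro n
      by_cases hn : n ∈ Finset.range (N + 1)
      · simpa using hne hn
      · have e1 : A n = 0 := by
          simp only [A, Finset.card_eq_zero, Finset.filter_eq_empty_iff]
          rintro h - rfl
          exact hn (hkN h)
        have e2 : B n = 0 := by
          simp only [B, Finset.card_eq_zero, Finset.filter_eq_empty_iff]
          rintro h - rfl
          exact hn (hlN h)
        rw [e1, e2]
    have e : ∀ n, Nonempty ({h // k h = n} ≃ {h // l h = n}) := by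
      intro n
      refine ⟨Fintype.equivOfCardEq ?_⟩
      rw [Fintype.card_subtype, Fintype.card_subtype]
      exact heq n
    refine hkl ⟨Equiv.ofFiberEquiv (fun n => (e n).some), fun h => ?_⟩
    exact (Equiv.ofFiberEquiv_map _ h).symm
  obtain ⟨n, hn, hmax⟩ := Finset.exists_max_image _ id hex
  rw [Finset.mem_filter] at hn
  have hc : (A n : ZMod p) - B n ≠ 0 := by
    rw [sub_ne_zero]
    intro hh
    rw [ZMod.natCast_eq_natCast_iff'] at hh
    rw [Nat.mod_eq_of_lt ((hA n).trans_lt hν), Nat.mod_eq_of_lt ((hB n).trans_lt hν)] at hh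
    exact hn.2 hh
  intro h0
  rw [hsum, ← Finset.add_sum_erase _ _ hn.1] at h0
  have h1 := eq_neg_of_add_eq_zero_left h0
  have hd := congrArg totalDegree h1
  rw [totalDegree_mul_of_isDomain (C_ne_zero.2 hc) (hg n), totalDegree_C, zero_add,
    totalDegree_neg] at hd
  have hpos : ∀ q ∈ (Finset.range (N + 1)).erase n,
      C ((A q : ZMod p) - B q) * g q ≠ 0 → q < n := by
    intro q hq hne
    rw [Finset.mem_erase] at hq
    by_contra hlt
    by_cases hAB : A q = B q
    · simp [hAB] at hne
    · have := hmax q (Finset.mem_filter.2 ⟨hq.2, hAB⟩)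
      simp at this
      exact hq.1 (le_antisymm this (not_lt.1 hlt))
  by_cases hz : (∑ x ∈ (Finset.range (N + 1)).erase n, C ((A x : ZMod p) - B x) * g x) = 0
  · rw [hz, neg_zero, mul_eq_zero] at h1
    rcases h1 with h1 | h1
    · exact C_ne_zero.2 hc h1
    · exact hg n h1
  · obtain ⟨q0, hq0, hq0'⟩ := Finset.exists_ne_zero_of_sum_ne_zero hz
    have hnpos : 0 < n := (Nat.zero_le _).trans_lt (hpos q0 hq0 hq0')
    have hle : (∑ x ∈ (Finset.range (N + 1)).erase n,
        C ((A x : ZMod p) - B x) * g x).totalDegree ≤ (g (n - 1)).totalDegree := by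
      refine totalDegree_finsetSum_le fun q hq => ?_
      by_cases hne : C ((A q : ZMod p) - B q) * g q = 0
      · rw [hne, totalDegree_zero]
        exact Nat.zero_le _
      · refine (totalDegree_mul _ _).trans ?_
        rw [totalDegree_C, zero_add]
        have := hpos q hq hne
        exact hmono.monotone (show q ≤ n - 1 by omega)
    have := hmono (show n - 1 < n by omega)
    simp only at this
    omega

theorem stmt2 (m ν : ℕ) (hm : 1 ≤ m) (hν : 1 ≤ ν) (s : ℕ → ℕ → ℕ) :
    ∃ (k₀ : ℕ) (c : ℝ), 0 < k₀ ∧ 0 < c ∧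
      ∀ (p : ℕ) [Fact p.Prime],
        ∀ F : Fin (m + 1) → MvPolynomial (Fin (m + 1)) (ZMod p),
          IsFSystem m s F →
          (∏ i ∈ Finset.range m, s i (i + 1)) ≠ 0 →
          ∀ k l : Fin ν → ℕ,
            (∀ h, k₀ ≤ k h) → (∀ h, k₀ ≤ l h) →
            (¬ ∃ σ : Equiv.Perm (Fin ν), ∀ h, k h = l (σ h)) →
            ∀ a : Fin m → ℤ,
              Int.gcd (Finset.univ.gcd a) (p : ℤ) = 1 →
              ‖∑ w : Fin (m + 1) → ZMod p,
                  eP p (MvPolynomial.eval w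
                    (∑ i : Fin m, MvPolynomial.C ((a i : ZMod p)) *
                      ∑ h : Fin ν,
                        (iterSys m (fun _ => F) (k h) i.castSucc -
                          iterSys m (fun _ => F) (l h) i.castSucc)))‖ ≤
                c * ((Finset.univ.sup k ⊔ Finset.univ.sup l : ℕ) : ℝ) ^ m * (p : ℝ) ^ m := by
  classical
  set T := ∑ i : Fin (m + 1), ∑ j : Fin (m + 1), s i.val j.val with hT
  refine ⟨1, (ν : ℝ) + ((1 + T : ℕ) : ℝ) ^ m, one_pos, by positivity, ?_⟩
  intro p hp F hF hs k l hk hl hkl a ha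
  set K := Finset.univ.sup k ⊔ Finset.univ.sup l with hK
  have hkK : ∀ h, k h ≤ K := fun h =>
    (Finset.le_sup (f := k) (Finset.mem_univ h)).trans le_sup_left
  have hlK : ∀ h, l h ≤ K := fun h =>
    (Finset.le_sup (f := l) (Finset.mem_univ h)).trans le_sup_right
  have hK1 : 1 ≤ K := (hk ⟨0, hν⟩).trans (hkK _)
  have hK1' : (1 : ℝ) ≤ (K : ℝ) ^ m := one_le_pow₀ (by exact_mod_cast hK1)
  rcases le_or_gt p ν with hpν | hpν
  · refine (norm_sum_le _ _).trans ?_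
    have : ∀ x : ZMod p, ‖eP p x‖ = 1 := fun x => by rw [eP_eq, AddChar.norm_apply]
    simp only [this]
    simp only [Finset.sum_const, Finset.card_univ, Fintype.card_pi, ZMod.card, Finset.prod_const,
      Fintype.card_fin, nsmul_eq_mul, mul_one, Nat.cast_pow]
    rw [pow_succ']
    have hpν' : (p : ℝ) ≤ ν := by exact_mod_cast hpν
    have h2 : (0 : ℝ) ≤ ((1 + T : ℕ) : ℝ) ^ m := by positivity
    gcongr
    nlinarith [Nat.cast_nonneg (α := ℝ) ν]
  · obtain ⟨G, H, hD⟩ := sysData_of_isFSystem m s F hF hs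
    have hex : ∃ i : Fin m, (a i : ZMod p) ≠ 0 := by
      by_contra hne
      push Not at hne
      have h1 : (p : ℤ) ∣ Finset.univ.gcd a := Finset.dvd_gcd fun i _ =>
        (ZMod.intCast_zmod_eq_zero_iff_dvd _ _).1 (hne i)
      have h2 := Int.dvd_coe_gcd h1 (dvd_refl (p : ℤ))
      rw [ha] at h2
      have h3 : p ∣ 1 := by exact_mod_cast h2
      exact hp.out.one_lt.ne' (Nat.dvd_one.1 h3)
    obtain ⟨r, hr, hmin⟩ : ∃ r : Fin m, (a r : ZMod p) ≠ 0 ∧ ∀ i < r, (a i : ZMod p) = 0 := by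
      obtain ⟨r, hr, hmin⟩ := Finset.exists_min_image
        (Finset.univ.filter fun i : Fin m => (a i : ZMod p) ≠ 0) id
        (by obtain ⟨i, hi⟩ := hex; exact ⟨i, by simpa using hi⟩)
      refine ⟨r, by simpa using hr, fun i hi => ?_⟩
      by_contra hne
      exact absurd (hmin i (by simpa using hne)) (not_le.2 hi)
    set P := ∑ h : Fin ν, (cf F G r.castSucc (k h) - cf F G r.castSucc (l h)) with hPdef
    have hP : P ≠ 0 := comb_ne_zero ν hpν (cf F G r.castSucc) (cf_ne_zero hD _)
      (cf_deg_strictMono hD _ (by simp)) k l hkl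
    have hPdeg : P.totalDegree ≤ (1 + T) ^ m * K ^ m := by
      refine totalDegree_finsetSum_le fun h _ => ?_
      refine (totalDegree_sub _ _).trans (max_le ?_ ?_)
      · exact cf_deg hD _ _ (hkK h) _ hm
      · exact cf_deg hD _ _ (hlK h) _ hm
    refine (char_sum_bound _ P hP r.castSucc (a r : ZMod p) hr ?_).trans ?_
    · intro w t
      simp only [map_sum, map_mul, map_sub, eval_C, hPdef]
      have hi : ∀ i : Fin m, (a i : ZMod p) * ∑ h,
          (eval (w + Pi.single r.castSucc t) (iterSys m (fun _ => F) (k h) i.castSucc) -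
            eval (w + Pi.single r.castSucc t) (iterSys m (fun _ => F) (l h) i.castSucc)) =
          (a i : ZMod p) * ∑ h,
          (eval w (iterSys m (fun _ => F) (k h) i.castSucc) -
            eval w (iterSys m (fun _ => F) (l h) i.castSucc)) +
          if i = r then t * ((a r : ZMod p) * ∑ h,
            (eval w (cf F G r.castSucc (k h)) - eval w (cf F G r.castSucc (l h)))) else 0 := by
        intro i
        rcases lt_trichotomy i r with hlt | rfl | hgt
        · simp [hmin i hlt, hlt.ne]
        · simp only [if_true, iter_eval_eq hD]
          rw [mul_left_comm t, ← mul_add]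
          congr 1
          rw [Finset.mul_sum, ← Finset.sum_add_distrib]
          refine Finset.sum_congr rfl fun h _ => ?_
          ring
        · rw [if_neg hgt.ne', add_zero]
          congr 1
          refine Finset.sum_congr rfl fun h _ => ?_
          rw [iter_eval_gt hD _ _ _ (by simpa using hgt), iter_eval_gt hD _ _ _ (by simpa using hgt)]
      rw [Finset.sum_congr rfl fun i _ => hi i, Finset.sum_add_distrib]
      simp
    · have h1 : (P.totalDegree : ℝ) ≤ ((1 + T : ℕ) : ℝ) ^ m * (K : ℝ) ^ m := by
        exact_mod_cast hPdeg
      have hν0 : (0 : ℝ) ≤ ν := Nat.cast_nonneg ν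
      gcongr
      nlinarith
end

section
/- Fix integers m ≥ 1, d ≥ 2 and ν ≥ 1 and a matrix S as below. There exists a constant c > 0 depending only on d, m and ν such that the following holds. Let p be a prime, 𝓕 ∈ 𝔉(S,m) over F_p a system of total degree d with s_{0,1}·s_{1,2}⋯s_{m−1,m} ≠ 0, and let {w_n} = {(u_{n,0},…,u_{n,m})} be the sequence generated by iterating 𝓕 from some initial vector, assumed purely periodic with period τ. Then for every positive integer N ≤ τ the discrepancy Δ of the N points (u_{n,0}/p, …, u_{n,m−1}/p) ∈ [0,1)^m, n = 0,…,N−1, satisfies Δ ≤ c·p^{α}·N^{−β}·(log p)^m, where α = (m² + mν + m)/(2ν(m+ν)) and β = 1/(2ν). -/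
open MvPolynomial

/-- Internal form of the system data. -/
structure SysData_s4 {R : Type*} [CommRing R] (m : ℕ) (s : ℕ → ℕ → ℕ) (d : ℕ)
    (F G H : Fin (m + 1) → MvPolynomial (Fin (m + 1)) R) : Prop where
  hF : ∀ i, F i = X i * G i + H i
  hGs : ∀ i, G i ∈ supported R (Set.Ioi i)
  hHs : ∀ i, H i ∈ supported R (Set.Ioi i)
  hGd : ∀ i, ∀ e ∈ (G i).support, ∀ j, i < j → e j ≤ s i.val j.val
  hHd : ∀ i, ∀ e ∈ (H i).support, ∀ j, i < j → e j ≤ s i.val j.val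
  hS : ∀ i : Fin (m + 1), ∑ j ∈ Finset.univ.filter (fun j => i < j), s i.val j.val ≤ d
  hpos : ∀ i : ℕ, i < m → 0 < s i (i + 1)
  hlast : ∃ g : R, g ≠ 0 ∧ G (Fin.last m) = C g
  hlead : ∀ i : Fin (m + 1), (i : ℕ) < m → ∃ (g : R) (Gt : MvPolynomial (Fin (m + 1)) R), g ≠ 0 ∧
    G i = C g * (∏ j ∈ Finset.univ.filter (fun j : Fin (m + 1) => i < j),
            X j ^ s i.val j.val) + Gt ∧
      (∀ e ∈ Gt.support, ∀ j : Fin (m + 1), i < j → e j < s i.val j.val)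

lemma mem_supported_of_support {R : Type*} [CommRing R] {m : ℕ} (i : Fin (m + 1))
    (G : MvPolynomial (Fin (m + 1)) R)
    (h : ∀ d ∈ G.support, ∀ j : Fin (m + 1), j ≤ i → d j = 0) :
    G ∈ supported R (Set.Ioi i) := by
  rw [mem_supported]
  intro j hj
  rw [Finset.mem_coe, mem_vars_iff_mem_support] at hj
  obtain ⟨e, he, hje⟩ := hj
  by_contra hcon
  have : j ≤ i := by simpa using hcon
  exact (Finsupp.mem_support_iff.mp hje) (h e he j this)

lemma support_zero_of_supported {R : Type*} [CommRing R] {σ : Type*} (S : Set σ)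
    {q : MvPolynomial σ R} (h : q ∈ supported R S) {e : σ →₀ ℕ} (he : e ∈ q.support)
    {j : σ} (hj : j ∉ S) : e j = 0 := by
  by_contra hcon
  exact hj ((mem_supported.mp h) (by
    rw [Finset.mem_coe, mem_vars_iff_mem_support]; exact ⟨e, he, Finsupp.mem_support_iff.mpr hcon⟩))

lemma degreeOf_zero_of_supported {R : Type*} [CommRing R] {σ : Type*} (S : Set σ)
    {q : MvPolynomial σ R} (h : q ∈ supported R S) {j : σ} (hj : j ∉ S) : degreeOf j q = 0 := by
  rw [← Nat.le_zero, degreeOf_le_iff]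
  intro e he
  exact (support_zero_of_supported S h he hj).le

lemma bind_mem_supported {R : Type*} [CommRing R] {σ : Type*} (S T : Set σ)
    (f : σ → MvPolynomial σ R) (hf : ∀ j ∈ S, f j ∈ supported R T)
    {q : MvPolynomial σ R} (h : q ∈ supported R S) : bind₁ f q ∈ supported R T := by
  rw [supported_eq_adjoin_X] at h
  induction h using Algebra.adjoin_induction with
  | mem x hx =>
    obtain ⟨j, hj, rfl⟩ := hx
    rw [bind₁_X_right]; exact hf j hj
  | algebraMap r => rw [algebraMap_eq, bind₁_C_right]; exact (supported R T).algebraMap_mem r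
  | add x y _ _ hx hy => rw [map_add]; exact add_mem hx hy
  | mul x y _ _ hx hy => rw [map_mul]; exact mul_mem hx hy

lemma eval_eq_of_supported {R : Type*} [CommRing R] {σ : Type*} (S : Set σ)
    {q : MvPolynomial σ R} (h : q ∈ supported R S) (v w : σ → R) (hvw : ∀ j ∈ S, v j = w j) :
    eval v q = eval w q := by
  rw [supported_eq_adjoin_X] at h
  induction h using Algebra.adjoin_induction with
  | mem x hx =>
    obtain ⟨j, hj, rfl⟩ := hx
    simpa using hvw j hj
  | algebraMap r => simp [algebraMap_eq]
  | add x y _ _ hx hy => rw [map_add, map_add, hx, hy]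
  | mul x y _ _ hx hy => rw [map_mul, map_mul, hx, hy]

/-- The iterates. -/
noncomputable abbrev It {R : Type*} [CommRing R] (m : ℕ)
    (F : Fin (m + 1) → MvPolynomial (Fin (m + 1)) R) (k : ℕ) :
    Fin (m + 1) → MvPolynomial (Fin (m + 1)) R := iterSys m (fun _ => F) k

/-- Iterated coefficient. -/
noncomputable def Gk {R : Type*} [CommRing R] (m : ℕ)
    (F G : Fin (m + 1) → MvPolynomial (Fin (m + 1)) R) (i : Fin (m + 1)) (k : ℕ) :
    MvPolynomial (Fin (m + 1)) R :=
  ∏ l ∈ Finset.range k, bind₁ (It m F l) (G i)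

lemma It_succ {R : Type*} [CommRing R] (m : ℕ)
    (F : Fin (m + 1) → MvPolynomial (Fin (m + 1)) R) (k : ℕ) (i) :
    It m F (k + 1) i = bind₁ (It m F k) (F i) := rfl

lemma It_zero {R : Type*} [CommRing R] (m : ℕ)
    (F : Fin (m + 1) → MvPolynomial (Fin (m + 1)) R) (i) :
    It m F 0 i = X i := rfl

lemma Gk_succ {R : Type*} [CommRing R] (m : ℕ)
    (F G : Fin (m + 1) → MvPolynomial (Fin (m + 1)) R) (i : Fin (m + 1)) (k : ℕ) :
    Gk m F G i (k + 1) = Gk m F G i k * bind₁ (It m F k) (G i) := Finset.prod_range_succ _ _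

namespace SysData_s4

variable {R : Type*} [CommRing R] {m : ℕ} {s : ℕ → ℕ → ℕ} {d : ℕ}
    {F G H : Fin (m + 1) → MvPolynomial (Fin (m + 1)) R}

lemma It_supported (h : SysData_s4 m s d F G H) (k : ℕ) (i : Fin (m + 1)) :
    It m F k i ∈ supported R (Set.Ici i) := by
  induction k generalizing i with
  | zero =>
    rw [It_zero, supported_eq_adjoin_X]
    exact Algebra.subset_adjoin ⟨i, by simp, rfl⟩
  | succ k ih =>
    rw [It_succ]
    refine bind_mem_supported (Set.Ici i) _ _ (fun j hj => supported_mono ?_ (ih j)) ?_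
    · exact Set.Ici_subset_Ici.mpr hj
    · rw [h.hF]
      refine add_mem (mul_mem ?_ (supported_mono Set.Ioi_subset_Ici_self (h.hGs i)))
        (supported_mono Set.Ioi_subset_Ici_self (h.hHs i))
      rw [supported_eq_adjoin_X]
      exact Algebra.subset_adjoin ⟨i, by simp, rfl⟩

lemma bind_supported (h : SysData_s4 m s d F G H) (k : ℕ) (i : Fin (m + 1))
    {q : MvPolynomial (Fin (m + 1)) R} (hq : q ∈ supported R (Set.Ioi i)) :
    bind₁ (It m F k) q ∈ supported R (Set.Ioi i) :=
  bind_mem_supported (Set.Ioi i) (Set.Ioi i) (It m F k) (fun j hj => supported_mono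
    (Set.Ici_subset_Ioi.mpr hj) (h.It_supported k j)) hq

lemma Gk_supported (h : SysData_s4 m s d F G H) (i : Fin (m + 1)) (k : ℕ) :
    Gk m F G i k ∈ supported R (Set.Ioi i) :=
  prod_mem fun l _ => h.bind_supported l i (h.hGs i)

lemma It_form (h : SysData_s4 m s d F G H) (i : Fin (m + 1)) (k : ℕ) :
    ∃ Q ∈ supported R (Set.Ioi i), It m F k i = X i * Gk m F G i k + Q := by
  induction k with
  | zero => exact ⟨0, zero_mem _, by simp [It_zero, Gk]⟩
  | succ k ih =>
    obtain ⟨Q, hQ, hQ2⟩ := ih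
    refine ⟨Q * bind₁ (It m F k) (G i) + bind₁ (It m F k) (H i),
      add_mem (mul_mem hQ (h.bind_supported k i (h.hGs i))) (h.bind_supported k i (h.hHs i)), ?_⟩
    rw [It_succ, h.hF, map_add, map_mul, bind₁_X_right, hQ2, Gk_succ]
    ring

lemma bind_totalDegree (h : SysData_s4 m s d F G H) (k : ℕ) (i : Fin (m + 1)) (him : (i : ℕ) < m)
    (hd : 1 ≤ d)
    (hk : ∀ j, (It m F k j).totalDegree ≤ (d * (k + 1)) ^ (m - j : ℕ))
    {q : MvPolynomial (Fin (m + 1)) R} (hq : q ∈ supported R (Set.Ioi i))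
    (hqd : ∀ e ∈ q.support, ∀ j, i < j → e j ≤ s i.val j.val) :
    (bind₁ (It m F k) q).totalDegree ≤ d * (d * (k + 1)) ^ (m - i - 1 : ℕ) := by
  rw [bind₁, aeval_def, eval₂_eq']
  refine totalDegree_finsetSum_le ?_
  intro e he
  refine (totalDegree_mul _ _).trans ?_
  rw [algebraMap_eq, totalDegree_C, zero_add]
  refine (totalDegree_finsetProd _ _).trans ?_
  have : ∀ j ∈ (Finset.univ : Finset (Fin (m+1))), (It m F k j ^ e j).totalDegree ≤
      (if i < j then s i.val j.val else 0) * (d * (k + 1)) ^ (m - i - 1 : ℕ) := by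
    intro j _
    refine (totalDegree_pow _ _).trans ?_
    split_ifs with hij
    · refine Nat.mul_le_mul (hqd e he j hij) ((hk j).trans ?_)
      apply Nat.pow_le_pow_right
      · positivity
      · have := Fin.lt_def.mp hij; omega
    · rw [support_zero_of_supported _ hq he (by simpa using hij)]; simp
  refine (Finset.sum_le_sum this).trans ?_
  rw [← Finset.sum_mul, ← Finset.sum_filter]
  exact Nat.mul_le_mul_right _ (h.hS i)

lemma pow_step (d k e : ℕ) :
    (d * (k + 1)) ^ (e + 1) + d * (d * (k + 1)) ^ e ≤ (d * (k + 1 + 1)) ^ (e + 1) := by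
  calc (d * (k + 1)) ^ (e + 1) + d * (d * (k + 1)) ^ e
      = (d * (k + 1)) ^ e * (d * (k + 1 + 1)) := by ring
    _ ≤ (d * (k + 1 + 1)) ^ e * (d * (k + 1 + 1)) := by gcongr <;> omega
    _ = _ := by ring

lemma It_totalDegree [Nontrivial R] (h : SysData_s4 m s d F G H) (hd : 1 ≤ d) (k : ℕ)
    (i : Fin (m + 1)) :
    (It m F k i).totalDegree ≤ (d * (k + 1)) ^ (m - i : ℕ) := by
  induction k generalizing i with
  | zero => 
    rw [It_zero, totalDegree_X]
    exact Nat.one_le_pow _ _ (by omega)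
  | succ k ih =>
    rw [It_succ, h.hF, map_add, map_mul, bind₁_X_right]
    by_cases him : (i : ℕ) < m
    · have h1 := h.bind_totalDegree k i him hd ih (h.hGs i) (h.hGd i)
      have h2 := h.bind_totalDegree k i him hd ih (h.hHs i) (h.hHd i)
      have h3 := ih i
      have h4 := pow_step d k (m - i - 1)
      have h5 : m - (i : ℕ) - 1 + 1 = m - i := by omega
      rw [h5] at h4
      refine (totalDegree_add _ _).trans (max_le ?_ ?_)
      · exact (totalDegree_mul _ _).trans (by omega)
      · omega
    · have hi : i = Fin.last m := by ext; simp; omega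
      have hQ : ∀ q ∈ supported R (Set.Ioi i), (bind₁ (It m F k) q).totalDegree = 0 := by
        intro q hq
        have : Set.Ioi i = ∅ := by rw [hi]; ext x; simp [Fin.le_last]
        rw [this, supported_empty] at hq
        obtain ⟨r, rfl⟩ := Algebra.mem_bot.mp hq
        simp [algebraMap_eq]
      refine (totalDegree_add _ _).trans (max_le ?_ ?_)
      · refine (totalDegree_mul _ _).trans ?_
        rw [hQ _ (h.hGs i)]
        refine (ih i).trans ?_
        gcongr <;> omega
      · rw [hQ _ (h.hHs i)]; omega

lemma Gk_totalDegree [Nontrivial R] (h : SysData_s4 m s d F G H) (hd : 1 ≤ d) (k : ℕ)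
    (i : Fin (m + 1)) (him : (i : ℕ) < m) :
    (Gk m F G i k).totalDegree ≤ (d * (k + 1)) ^ (m - i : ℕ) := by
  induction k with
  | zero => simp [Gk]
  | succ k ih =>
    rw [Gk_succ]
    have h1 := h.bind_totalDegree k i him hd (h.It_totalDegree hd k) (h.hGs i) (h.hGd i)
    have h4 := pow_step d k (m - i - 1)
    have h5 : m - (i : ℕ) - 1 + 1 = m - i := by omega
    rw [h5] at h4
    exact (totalDegree_mul _ _).trans (by omega)

lemma It_ne_degree [IsDomain R] (h : SysData_s4 m s d F G H) (i : Fin (m + 1)) (k : ℕ)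
    (hG : Gk m F G i k ≠ 0) : degreeOf i (It m F k i) = 1 := by
  obtain ⟨Q, hQ, hQ2⟩ := h.It_form i k
  have h0 : degreeOf i (Gk m F G i k) = 0 :=
    degreeOf_zero_of_supported _ (h.Gk_supported i k) (by simp)
  have h1 : degreeOf i Q = 0 := degreeOf_zero_of_supported _ hQ (by simp)
  have h2 : degreeOf i (X i * Gk m F G i k) = 1 := by
    rw [degreeOf_mul_eq (X_ne_zero _) hG, h0, degreeOf_X_self]
  rw [hQ2, degreeOf_add_eq_of_degreeOf_lt (by omega), h2]

lemma bind_degree [IsDomain R] (h : SysData_s4 m s d F G H) (i : Fin (m + 1)) (him : (i : ℕ) < m)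
    (k : ℕ) (hG : ∀ j, i < j → Gk m F G j k ≠ 0) :
    degreeOf ⟨i + 1, by omega⟩ (bind₁ (It m F k) (G i)) = s i (i + 1) := by
  obtain ⟨g, Gt, hg, hGe, hGt⟩ := h.hlead i him
  set i' : Fin (m + 1) := ⟨i + 1, by omega⟩ with hi'
  have hii' : i < i' := by rw [Fin.lt_def]; simp [hi']
  have hdeg1 : ∀ j, i < j → degreeOf i' (It m F k j) = if j = i' then 1 else 0 := by
    intro j hj
    split_ifs with hji
    · rw [hji]; exact h.It_ne_degree i' k (hG i' hii')
    · refine degreeOf_zero_of_supported _ (h.It_supported k j) ?_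
      simp only [Set.mem_Ici, Fin.le_def, hi']
      have := Fin.lt_def.mp hj
      have h3 : (j : ℕ) ≠ i + 1 := fun h4 => hji (Fin.ext h4)
      omega
  have hne : ∀ j, i < j → It m F k j ≠ 0 := by
    intro j hj h0
    have := h.It_ne_degree j k (hG j hj)
    rw [h0] at this; simp at this
  have hs := h.hpos i him
  rw [hGe, map_add]
  have hA : degreeOf i' (bind₁ (It m F k) (C g *
      ∏ j ∈ Finset.univ.filter (fun j : Fin (m + 1) => i < j), X j ^ s i.val j.val))
      = s i (i + 1) := by
    rw [map_mul, bind₁_C_right, map_prod, degreeOf_C_mul _ _ (mem_nonZeroDivisors_of_ne_zero hg)]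
    rw [degreeOf_prod_eq]
    · rw [Finset.sum_eq_single i']
      · rw [map_pow, bind₁_X_right, degreeOf_pow_eq _ _ _ (hne i' hii'), hdeg1 i' hii']
        simp [hi']
      · intro j hj hji
        have hj' : i < j := by simpa using hj
        rw [map_pow, bind₁_X_right, degreeOf_pow_eq _ _ _ (hne j hj'), hdeg1 j hj']
        simp [hji]
      · intro hcon; simp [hii'] at hcon
    · intro j hj
      have hj' : i < j := by simpa using hj
      rw [map_pow, bind₁_X_right]
      exact pow_ne_zero _ (hne j hj')
  have hB : degreeOf i' (bind₁ (It m F k) Gt) < s i (i + 1) := by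
    have hGts : Gt ∈ supported R (Set.Ioi i) := by
      have : Gt = G i - C g * ∏ j ∈ Finset.univ.filter (fun j : Fin (m + 1) => i < j),
            X j ^ s i.val j.val := by rw [hGe]; ring
      rw [this]
      refine sub_mem (h.hGs i) (mul_mem ((supported R _).algebraMap_mem g) (prod_mem ?_))
      intro j hj
      refine pow_mem ?_ _
      rw [X_mem_supported]
      simpa using hj
    rw [bind₁, aeval_def, eval₂_eq']
    refine (degreeOf_sum_le _ _ _).trans_lt ?_
    rw [Finset.sup_lt_iff hs]
    intro e he
    rw [algebraMap_eq]
    refine (degreeOf_C_mul_le _ _ _).trans_lt ?_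
    refine (degreeOf_prod_le _ _ _).trans_lt ?_
    refine lt_of_le_of_lt (b := e i') ?_ (hGt e he i' hii')
    rw [Finset.sum_eq_single i']
    · refine (degreeOf_pow_le _ _ _).trans ?_
      rw [hdeg1 i' hii']; simp
    · intro j _ hji
      by_cases hij : i < j
      · rw [← Nat.le_zero]
        refine (degreeOf_pow_le _ _ _).trans ?_
        rw [hdeg1 j hij]; simp [hji]
      · rw [support_zero_of_supported _ hGts he (by simpa using hij)]; simp
    · simp
  rw [degreeOf_add_eq_of_degreeOf_lt (by rw [hA]; exact hB), hA]

lemma bind_ne_zero [IsDomain R] (h : SysData_s4 m s d F G H) (n : ℕ) :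
    ∀ i : Fin (m + 1), (i : ℕ) + n = m → ∀ k, bind₁ (It m F k) (G i) ≠ 0 := by
  induction n using Nat.strong_induction_on with
  | _ n ih =>
    intro i hi k
    by_cases him : (i : ℕ) < m
    · have := h.bind_degree i him k (by
        intro j hj
        have hj' := Fin.lt_def.mp hj
        exact Finset.prod_ne_zero_iff.mpr fun l _ => ih (m - j) (by omega) j (by omega) l)
      intro h0
      rw [h0] at this
      have h2 := h.hpos i him
      simp at this
      omega
    · have hi : i = Fin.last m := by ext; simp; omega
      obtain ⟨g, hg, hGg⟩ := h.hlast
      rw [hi, hGg, bind₁_C_right]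
      simpa using hg

lemma Gk_ne_zero [IsDomain R] (h : SysData_s4 m s d F G H) (i : Fin (m + 1)) (k : ℕ) :
    Gk m F G i k ≠ 0 :=
  Finset.prod_ne_zero_iff.mpr fun l _ => h.bind_ne_zero (m - i) i (by omega) l

lemma Gk_degree [IsDomain R] (h : SysData_s4 m s d F G H) (i : Fin (m + 1)) (him : (i : ℕ) < m)
    (k : ℕ) : degreeOf ⟨i + 1, by omega⟩ (Gk m F G i k) = k * s i (i + 1) := by
  rw [Gk, degreeOf_prod_eq]
  · rw [Finset.sum_congr rfl fun l _ => h.bind_degree i him l fun j _ => h.Gk_ne_zero j l]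
    simp
  · intro l _; exact h.bind_ne_zero (m - i) i (by omega) l

lemma Gk_indep [IsDomain R] (h : SysData_s4 m s d F G H) (i : Fin (m + 1)) (him : (i : ℕ) < m)
    (K : ℕ) (c : ℕ → R) (hc : ∑ k ∈ Finset.range K, C (c k) * Gk m F G i k = 0) :
    ∀ k < K, c k = 0 := by
  induction K with
  | zero => intro k hk; omega
  | succ K ih =>
    have hcK : c K = 0 := by
      by_contra hne
      rw [Finset.sum_range_succ] at hc
      rcases Nat.eq_zero_or_pos K with rfl | hK
      · simp [Gk] at hc; exact hne hc
      have hs := h.hpos i him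
      have h1 : degreeOf ⟨i + 1, by omega⟩ (C (c K) * Gk m F G i K) = K * s i (i + 1) := by
        rw [degreeOf_C_mul _ _ (mem_nonZeroDivisors_of_ne_zero hne), h.Gk_degree i him]
      have h2 : degreeOf ⟨i + 1, by omega⟩ (∑ k ∈ Finset.range K, C (c k) * Gk m F G i k)
          < K * s i (i + 1) := by
        refine (degreeOf_sum_le _ _ _).trans_lt ?_
        rw [Finset.sup_lt_iff (by exact Nat.mul_pos hK hs)]
        intro k hk
        refine (degreeOf_C_mul_le _ _ _).trans_lt ?_
        rw [h.Gk_degree i him]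
        exact Nat.mul_lt_mul_of_pos_right (Finset.mem_range.mp hk) hs
      have h3 := degreeOf_add_eq_of_degreeOf_lt (h1.symm ▸ h2)
      rw [add_comm (C (c K) * Gk m F G i K), hc, h1] at h3
      simp at h3
      omega
    rw [Finset.sum_range_succ, hcK] at hc
    simp only [C_0, zero_mul, add_zero] at hc
    intro k hk
    rcases Nat.lt_succ_iff_lt_or_eq.mp hk with h1 | h1
    · exact ih hc k h1
    · rw [h1]; exact hcK

end SysData_s4

lemma sysData_of {R : Type*} [CommRing R] [IsDomain R] (m d : ℕ) (s : ℕ → ℕ → ℕ)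
    (F : Fin (m + 1) → MvPolynomial (Fin (m + 1)) R) (hF : IsFSystem m s F)
    (hd : (Finset.univ.sup fun i => (F i).totalDegree) = d)
    (hs : (∏ i ∈ Finset.range m, s i (i + 1)) ≠ 0) :
    ∃ G H, SysData_s4 m s d F G H := by
  obtain ⟨⟨g, h, hg, hl⟩, hF⟩ := hF
  have key : ∀ i : Fin (m + 1), ∃ G H : MvPolynomial (Fin (m + 1)) R,
      F i = X i * G + H ∧ G ∈ supported R (Set.Ioi i) ∧ H ∈ supported R (Set.Ioi i) ∧
      (∀ e ∈ G.support, ∀ j, i < j → e j ≤ s i.val j.val) ∧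
      (∀ e ∈ H.support, ∀ j, i < j → e j ≤ s i.val j.val) ∧
      (∑ j ∈ Finset.univ.filter (fun j => i < j), s i.val j.val ≤ d) ∧
      (i = Fin.last m → ∃ g : R, g ≠ 0 ∧ G = C g) ∧
      ((i : ℕ) < m → ∃ (g : R) (Gt : MvPolynomial (Fin (m + 1)) R), g ≠ 0 ∧
        G = C g * (∏ j ∈ Finset.univ.filter (fun j : Fin (m + 1) => i < j),
            X j ^ s i.val j.val) + Gt ∧
      (∀ e ∈ Gt.support, ∀ j : Fin (m + 1), i < j → e j < s i.val j.val)) := by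
    intro i
    by_cases him : (i : ℕ) < m
    · obtain ⟨G, H, Gt, g, hg, hFi, hG, hH, hGe, hGt, hHd⟩ := hF i him
      have hii : i < ⟨i + 1, by omega⟩ := by rw [Fin.lt_def]; simp
      set e0 : Fin (m + 1) →₀ ℕ :=
        ∑ j ∈ Finset.univ.filter (fun j : Fin (m + 1) => i < j), Finsupp.single j (s i j) with he0
      have hmon : C g * (∏ j ∈ Finset.univ.filter (fun j : Fin (m + 1) => i < j),
            X j ^ s i.val j.val) = monomial e0 g := by
        rw [he0, monomial_sum_index]
        simp [X_pow_eq_monomial]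
      have he0j : ∀ j, i < j → e0 j = s i j := by
        intro j hj
        rw [he0, Finsupp.finsetSum_apply, Finset.sum_eq_single j]
        · simp
        · intro b _ hb; simp [hb]
        · intro hcon; simp [hj] at hcon
      have he0i : e0 i = 0 := by
        rw [he0, Finsupp.finsetSum_apply]
        refine Finset.sum_eq_zero ?_
        intro j hj
        have : i < j := by simpa using hj
        simp [this.ne']
      refine ⟨G, H, hFi, mem_supported_of_support i G hG, mem_supported_of_support i H hH,
        ?_, hHd, ?_, ?_, fun _ => ⟨g, Gt, hg, hGe, hGt⟩⟩
      · intro e he j hj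
        rw [hGe, hmon] at he
        rcases Finset.mem_union.mp (support_add he) with h1 | h1
        · have := support_monomial_subset h1
          rw [Finset.mem_singleton] at this
          rw [this, he0j j hj]
        · exact (hGt e h1 j hj).le
      · have hGt0 : coeff e0 Gt = 0 := by
          by_contra hcon
          have := hGt e0 (mem_support_iff.mpr hcon) _ hii
          rw [he0j _ hii] at this
          exact lt_irrefl _ this
        have hH0 : coeff (Finsupp.single i 1 + e0) H = 0 := by
          by_contra hcon
          have := hH _ (mem_support_iff.mpr hcon) i le_rfl
          simp at this
        have hF0 : coeff (Finsupp.single i 1 + e0) (F i) = g := by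
          rw [hFi, coeff_add, coeff_X_mul, hH0, hGe, hmon, coeff_add, hGt0]
          simp
        have h1 := le_totalDegree (p := F i) (s := Finsupp.single i 1 + e0)
          (by rw [mem_support_iff, hF0]; exact hg)
        have h2 : (F i).totalDegree ≤ d := by
          rw [← hd]; exact Finset.le_sup (f := fun i => (F i).totalDegree) (Finset.mem_univ i)
        refine le_trans ?_ (h1.trans h2)
        rw [Finsupp.sum_fintype _ _ (by simp)]
        rw [Finset.sum_filter]
        refine Finset.sum_le_sum ?_
        intro j _
        split_ifs with hij
        · simp [he0j j hij]
        · omega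
      · intro hi; rw [hi] at him; simp at him
    · have hi : i = Fin.last m := by ext; simp; omega
      have hno : ∀ j : Fin (m + 1), ¬ i < j := by
        intro j hj; rw [hi] at hj; exact absurd hj (not_lt.mpr (Fin.le_last j))
      refine ⟨C g, C h, ?_, (supported R _).algebraMap_mem g, (supported R _).algebraMap_mem h,
        fun e _ j hj => (hno j hj).elim, fun e _ j hj => (hno j hj).elim, ?_,
        fun _ => ⟨g, hg, rfl⟩, fun h => (him h).elim⟩
      · rw [hi, hl]; ring
      · rw [Finset.filter_false_of_mem (fun j _ => hno j)]; simp
  choose G H h1 h2 h3 h4 h5 h6 h7 h8 using key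
  refine ⟨G, H, h1, h2, h3, h4, h5, h6, ?_, h7 _ rfl, h8⟩
  intro i hi
  rw [Finset.prod_ne_zero_iff] at hs
  exact Nat.pos_of_ne_zero (hs i (Finset.mem_range.mpr hi))


/-- Abbreviation for the standard additive character. -/
noncomputable abbrev psi (p : ℕ) [NeZero p] : AddChar (ZMod p) ℂ := ZMod.stdAddChar

lemma psi_norm (p : ℕ) [NeZero p] (x : ZMod p) : ‖psi p x‖ = 1 := by
  rw [psi, ZMod.stdAddChar_apply]; exact Circle.norm_coe _

lemma psi_conj (p : ℕ) [NeZero p] (x : ZMod p) : (starRingEnd ℂ) (psi p x) = psi p (-x) := by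
  rw [AddChar.map_neg_eq_conj]

lemma psi_map_sum (p : ℕ) [NeZero p] {ι : Type*} (t : Finset ι) (f : ι → ZMod p) :
    psi p (∑ j ∈ t, f j) = ∏ j ∈ t, psi p (f j) := by
  classical
  induction t using Finset.induction_on with
  | empty => simp
  | insert a t ha ih => rw [Finset.sum_insert ha, Finset.prod_insert ha, AddChar.map_add_eq_mul, ih]

lemma psi_sum (p : ℕ) [Fact p.Prime] (b : ZMod p) :
    ∑ t : ZMod p, psi p (t * b) = if b = 0 then (p : ℂ) else 0 := by
  have := AddChar.sum_mulShift (R := ZMod p) (ψ := psi p) b (ZMod.isPrimitive_stdAddChar p)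
  rw [this]; simp [ZMod.card]

lemma charsum_le (p : ℕ) [Fact p.Prime] (n : ℕ) (i : Fin n)
    (L Q : (Fin n → ZMod p) → ZMod p) (hL : ∀ w t, L (w + Pi.single i t) = L w)
    (hQ : ∀ w t, Q (w + Pi.single i t) = Q w) :
    ‖∑ w, psi p (w i * L w + Q w)‖ ≤ (Finset.univ.filter fun w => L w = 0).card := by
  set S := ∑ w, psi p (w i * L w + Q w) with hS
  have hp : (0 : ℝ) < p := by exact_mod_cast (Fact.out : p.Prime).pos
  have h1 : ∀ t : ZMod p, S = ∑ w, psi p (w i * L w + Q w) * psi p (t * L w) := by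
    intro t
    rw [hS, ← Equiv.sum_comp (Equiv.addRight (Pi.single i t : Fin n → ZMod p))]
    refine Finset.sum_congr rfl fun w _ => ?_
    simp only [Equiv.coe_addRight]
    rw [hL, hQ, ← AddChar.map_add_eq_mul]
    congr 1
    simp; ring
  have h2 : (p : ℂ) * S = ∑ w, psi p (w i * L w + Q w) * (if L w = 0 then (p : ℂ) else 0) := by
    calc (p : ℂ) * S = ∑ t : ZMod p, S := by simp [ZMod.card]
      _ = ∑ t : ZMod p, ∑ w, psi p (w i * L w + Q w) * psi p (t * L w) :=
          Finset.sum_congr rfl fun t _ => h1 t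
      _ = _ := by
          rw [Finset.sum_comm]
          refine Finset.sum_congr rfl fun w _ => ?_
          rw [← Finset.mul_sum, psi_sum]
  have h3 : (p : ℝ) * ‖S‖ ≤ p * (Finset.univ.filter fun w => L w = 0).card := by
    calc (p : ℝ) * ‖S‖ = ‖(p : ℂ) * S‖ := by simp
      _ ≤ ∑ w, ‖psi p (w i * L w + Q w) * (if L w = 0 then (p : ℂ) else 0)‖ := by
          rw [h2]; exact norm_sum_le _ _
      _ = ∑ w, if L w = 0 then (p : ℝ) else 0 := by
          refine Finset.sum_congr rfl fun w _ => ?_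
          rw [norm_mul, psi_norm]
          split_ifs <;> simp
      _ = _ := by rw [← Finset.sum_filter]; simp [mul_comm]
  exact le_of_mul_le_mul_left h3 hp

lemma zeros_le (p : ℕ) [Fact p.Prime] (m : ℕ) (L : MvPolynomial (Fin (m + 1)) (ZMod p))
    (hL : L ≠ 0) :
    (Finset.univ.filter fun w => eval w L = 0).card ≤ L.totalDegree * p ^ m := by
  have h := schwartz_zippel_totalDegree hL (Finset.univ : Finset (ZMod p))
  have hp : (0 : ℚ≥0) < p := by exact_mod_cast (Fact.out : p.Prime).pos
  simp only [Fintype.piFinset_univ, Finset.card_univ, ZMod.card] at h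
  rw [div_le_div_iff₀ (by positivity) hp] at h
  have h2 : (Finset.univ.filter fun w => eval w L = 0).card * p ≤ L.totalDegree * p ^ (m + 1) := by
    exact_mod_cast h
  rw [pow_succ, ← mul_assoc] at h2
  exact Nat.le_of_mul_le_mul_right h2 (Fact.out : p.Prime).pos

lemma eval_It {R : Type*} [CommRing R] (m : ℕ)
    (F : Fin (m + 1) → MvPolynomial (Fin (m + 1)) R) (u : ℕ → Fin (m + 1) → R)
    (hu : ∀ n i, u (n + 1) i = eval (u n) (F i)) (n k : ℕ) (i) :
    eval (u n) (It m F k i) = u (n + k) i := by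
  induction k generalizing i with
  | zero => simp [It_zero]
  | succ k ih =>
    rw [It_succ, ← add_assoc, hu, eval, eval₂Hom_bind₁]
    change eval (fun i => eval (u n) (It m F k i)) (F i) = _
    congr 2
    funext j; exact ih j

/-- The linear form of the iterates. -/
noncomputable def Pk {R : Type*} [CommRing R] (m : ℕ)
    (F : Fin (m + 1) → MvPolynomial (Fin (m + 1)) R) (a : Fin m → R) (k : ℕ) :
    MvPolynomial (Fin (m + 1)) R := ∑ i, C (a i) * It m F k i.castSucc

lemma Pk_form {R : Type*} [CommRing R] {m : ℕ} {s : ℕ → ℕ → ℕ} {d : ℕ}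
    {F G H : Fin (m + 1) → MvPolynomial (Fin (m + 1)) R} (h : SysData_s4 m s d F G H)
    (a : Fin m → R) (i0 : Fin m) (ha : ∀ i < i0, a i = 0) (k : ℕ) :
    ∃ Q ∈ supported R (Set.Ioi i0.castSucc),
      Pk m F a k = X i0.castSucc * (C (a i0) * Gk m F G i0.castSucc k) + Q := by
  obtain ⟨Q, hQ, hQ2⟩ := h.It_form i0.castSucc k
  refine ⟨C (a i0) * Q + ∑ i ∈ Finset.univ.erase i0, C (a i) * It m F k i.castSucc, ?_, ?_⟩
  · refine add_mem (mul_mem ((supported R _).algebraMap_mem _) hQ) (sum_mem ?_)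
    intro i hi
    by_cases hlt : i < i0
    · rw [ha i hlt]; simp
    · refine mul_mem ((supported R _).algebraMap_mem _) (supported_mono ?_ (h.It_supported k _))
      have : i0 < i := lt_of_le_of_ne (not_lt.mp hlt) (Finset.ne_of_mem_erase hi).symm
      exact Set.Ici_subset_Ioi.mpr (by simpa using this)
  · rw [Pk, ← Finset.add_sum_erase _ _ (Finset.mem_univ i0), hQ2]
    ring

lemma pair_bound (p : ℕ) [Fact p.Prime] {m : ℕ} {s : ℕ → ℕ → ℕ} {d : ℕ} (hd : 1 ≤ d)
    {F G H : Fin (m + 1) → MvPolynomial (Fin (m + 1)) (ZMod p)} (h : SysData_s4 m s d F G H)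
    (a : Fin m → ZMod p) (ha : a ≠ 0) (ν K : ℕ) (hν : ν < p) (k l : Fin ν → Fin K)
    (hkl : ∃ j, ∀ j', k j' ≠ l j) :
    ‖∑ w, psi p (∑ j, eval w (Pk m F a (k j)) - ∑ j, eval w (Pk m F a (l j)))‖ ≤
      ((d * K) ^ m * p ^ m : ℕ) := by
  classical
  -- minimal index
  obtain ⟨i0, hi0, hmin⟩ : ∃ i0, a i0 ≠ 0 ∧ ∀ i < i0, a i = 0 := by
    have hne : (Finset.univ.filter fun i => a i ≠ 0).Nonempty := by
      obtain ⟨i, hi⟩ := Function.ne_iff.mp ha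
      exact ⟨i, by simpa using hi⟩
    refine ⟨(Finset.univ.filter fun i => a i ≠ 0).min' hne, ?_, ?_⟩
    · simpa using Finset.min'_mem _ hne
    · intro i hi
      by_contra hcon
      exact absurd (Finset.min'_le _ i (by simpa using hcon)) (not_le.mpr hi)
  choose Q hQ hQ2 using fun k => Pk_form h a i0 hmin k
  set L : MvPolynomial (Fin (m + 1)) (ZMod p) :=
    ∑ j, Gk m F G i0.castSucc (k j) - ∑ j, Gk m F G i0.castSucc (l j) with hLdef
  set Q' : MvPolynomial (Fin (m + 1)) (ZMod p) := ∑ j, Q (k j) - ∑ j, Q (l j) with hQ'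
  have hLs : C (a i0) * L ∈ supported (ZMod p) (Set.Ioi i0.castSucc) :=
    mul_mem ((supported (ZMod p) _).algebraMap_mem _) (sub_mem
      (sum_mem fun j _ => h.Gk_supported _ _) (sum_mem fun j _ => h.Gk_supported _ _))
  have hQs : Q' ∈ supported (ZMod p) (Set.Ioi i0.castSucc) :=
    sub_mem (sum_mem fun j _ => hQ _) (sum_mem fun j _ => hQ _)
  have hinv : ∀ q ∈ supported (ZMod p) (Set.Ioi i0.castSucc), ∀ (w : Fin (m + 1) → ZMod p) t,
      eval (w + Pi.single i0.castSucc t) q = eval w q := by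
    intro q hq w t
    refine eval_eq_of_supported _ hq _ _ ?_
    intro j hj
    have : j ≠ i0.castSucc := ne_of_gt hj
    simp [this]
  have hexp : ∀ w, ∑ j, eval w (Pk m F a (k j)) - ∑ j, eval w (Pk m F a (l j)) =
      w i0.castSucc * eval w (C (a i0) * L) + eval w Q' := by
    intro w
    simp only [hQ2, hLdef, hQ', map_add, map_mul, map_sub, map_sum, eval_X, eval_C,
      Finset.sum_add_distrib, ← Finset.mul_sum]
    ring
  have hL0 : L ≠ 0 := by
    intro h0
    obtain ⟨j0, hj0⟩ := hkl
    set c : ℕ → ZMod p := fun t => ((Finset.univ.filter fun j => (k j : ℕ) = t).card : ZMod p) -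
      ((Finset.univ.filter fun j => (l j : ℕ) = t).card : ZMod p) with hc
    have hcount : ∀ f : Fin ν → Fin K, ∑ j, Gk m F G i0.castSucc (f j) =
        ∑ t ∈ Finset.range K, C ((Finset.univ.filter fun j => (f j : ℕ) = t).card : ZMod p) *
          Gk m F G i0.castSucc t := by
      intro f
      rw [← Finset.sum_fiberwise_of_maps_to (t := Finset.range K) (g := fun j => (f j : ℕ))
        (fun j _ => Finset.mem_range.mpr (f j).2)]
      refine Finset.sum_congr rfl fun t _ => ?_
      rw [Finset.sum_congr rfl (g := fun _ => Gk m F G i0.castSucc t)]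
      · rw [Finset.sum_const, nsmul_eq_mul]; simp
      · intro j hj
        rw [(Finset.mem_filter.mp hj).2]
    have hz := h.Gk_indep i0.castSucc (by simp) K c (by
      rw [← h0, hLdef, hcount k, hcount l, ← Finset.sum_sub_distrib]
      refine Finset.sum_congr rfl fun t _ => ?_
      rw [hc, C_sub]; ring) (l j0) (l j0).2
    have hk0 : (Finset.univ.filter fun j => (k j : ℕ) = l j0) = ∅ := by
      refine Finset.filter_false_of_mem fun j _ hj => hj0 j (Fin.ext hj)
    rw [hc] at hz
    simp only [hk0, Finset.card_empty, Nat.cast_zero, zero_sub, neg_eq_zero] at hz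
    rw [ZMod.natCast_eq_zero_iff] at hz
    have hle : (Finset.univ.filter fun j => (l j : ℕ) = l j0).card ≤ ν := by
      simpa using Finset.card_filter_le (Finset.univ : Finset (Fin ν)) (fun j => (l j : ℕ) = l j0)
    have hpos : 0 < (Finset.univ.filter fun j => (l j : ℕ) = l j0).card :=
      Finset.card_pos.mpr ⟨j0, by simp⟩
    exact absurd (Nat.le_of_dvd hpos hz) (by omega)
  have hLa : C (a i0) * L ≠ 0 := mul_ne_zero (by simpa using hi0) hL0
  have hGd : ∀ t : Fin K, (Gk m F G i0.castSucc t).totalDegree ≤ (d * K) ^ m := by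
    intro t
    refine (h.Gk_totalDegree hd t i0.castSucc (by simp)).trans ?_
    have ht := t.2
    calc (d * (t + 1)) ^ (m - (i0.castSucc : ℕ)) ≤ (d * K) ^ (m - (i0.castSucc : ℕ)) := by
          gcongr; omega
      _ ≤ _ := by
          apply Nat.pow_le_pow_right
          · exact Nat.mul_pos hd (by omega)
          · omega
  have hLd : (C (a i0) * L).totalDegree ≤ (d * K) ^ m := by
    refine (totalDegree_mul _ _).trans ?_
    rw [totalDegree_C, zero_add, hLdef]
    refine (totalDegree_sub _ _).trans (max_le ?_ ?_)
    · exact totalDegree_finsetSum_le fun j _ => hGd _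
    · exact totalDegree_finsetSum_le fun j _ => hGd _
  simp only [hexp]
  refine (charsum_le p (m + 1) i0.castSucc (fun w => eval w (C (a i0) * L)) (fun w => eval w Q')
    (hinv _ hLs) (hinv _ hQs)).trans ?_
  exact_mod_cast (zeros_le p m _ hLa).trans (Nat.mul_le_mul_right _ hLd)

lemma pairs_card (ν K : ℕ) :
    (Finset.univ.filter fun kl : (Fin ν → Fin K) × (Fin ν → Fin K) =>
      ∀ j, ∃ j', kl.1 j' = kl.2 j).card ≤ ν ^ ν * K ^ ν := by
  classical
  have : (Finset.univ.filter fun kl : (Fin ν → Fin K) × (Fin ν → Fin K) =>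
      ∀ j, ∃ j', kl.1 j' = kl.2 j) ⊆
      Finset.image (fun x : (Fin ν → Fin ν) × (Fin ν → Fin K) => (x.2, fun j => x.2 (x.1 j)))
        Finset.univ := by
    intro ⟨k, l⟩ hkl
    have hkl' : ∀ j, ∃ j', k j' = l j := by simpa using hkl
    choose σ hσ using hkl'
    refine Finset.mem_image.mpr ⟨(σ, k), Finset.mem_univ _, ?_⟩
    simp [hσ]
  refine (Finset.card_le_card this).trans (Finset.card_image_le.trans ?_)
  simp

lemma moment_bound (p : ℕ) [Fact p.Prime] {m : ℕ} {s : ℕ → ℕ → ℕ} {d : ℕ} (hd : 1 ≤ d)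
    {F G H : Fin (m + 1) → MvPolynomial (Fin (m + 1)) (ZMod p)} (h : SysData_s4 m s d F G H)
    (a : Fin m → ZMod p) (ha : a ≠ 0) (ν K : ℕ) (hν : ν < p) :
    ∑ w, ‖∑ k : Fin K, psi p (eval w (Pk m F a k))‖ ^ (2 * ν) ≤
      (ν : ℝ) ^ ν * (K : ℝ) ^ ν * (p : ℝ) ^ (m + 1) +
        (K : ℝ) ^ (2 * ν) * ((d * K : ℝ) ^ m * (p : ℝ) ^ m) := by
  classical
  have h1 : ∀ w, ((‖∑ k : Fin K, psi p (eval w (Pk m F a k))‖ ^ (2 * ν) : ℝ) : ℂ) =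
      ∑ kl : (Fin ν → Fin K) × (Fin ν → Fin K),
        psi p (∑ j, eval w (Pk m F a (kl.1 j)) - ∑ j, eval w (Pk m F a (kl.2 j))) := by
    intro w
    rw [pow_mul, Complex.ofReal_pow, Complex.ofReal_pow, ← Complex.mul_conj', mul_pow, map_sum,
      Fintype.sum_pow, Fintype.sum_pow, Finset.sum_mul_sum, Fintype.sum_prod_type]
    refine Finset.sum_congr rfl fun k _ => Finset.sum_congr rfl fun l _ => ?_
    rw [sub_eq_add_neg, AddChar.map_add_eq_mul, psi_map_sum, ← Finset.sum_neg_distrib,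
      psi_map_sum]
    simp only [psi_conj]
  have h2 : (((∑ w, ‖∑ k : Fin K, psi p (eval w (Pk m F a k))‖ ^ (2 * ν)) : ℝ) : ℂ) =
      ∑ kl : (Fin ν → Fin K) × (Fin ν → Fin K), ∑ w,
        psi p (∑ j, eval w (Pk m F a (kl.1 j)) - ∑ j, eval w (Pk m F a (kl.2 j))) := by
    rw [Finset.sum_comm, Complex.ofReal_sum]
    exact Finset.sum_congr rfl fun w _ => h1 w
  have h3 : ∑ w, ‖∑ k : Fin K, psi p (eval w (Pk m F a k))‖ ^ (2 * ν) =
      ‖(((∑ w, ‖∑ k : Fin K, psi p (eval w (Pk m F a k))‖ ^ (2 * ν)) : ℝ) : ℂ)‖ := by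
    rw [Complex.norm_real, Real.norm_of_nonneg]
    positivity
  rw [h3, h2]
  refine (norm_sum_le _ _).trans ?_
  have h4 : ∀ kl ∈ (Finset.univ : Finset ((Fin ν → Fin K) × (Fin ν → Fin K))), ‖∑ w,
        psi p (∑ j, eval w (Pk m F a (kl.1 j)) - ∑ j, eval w (Pk m F a (kl.2 j)))‖ ≤
        (if (∀ j, ∃ j', kl.1 j' = kl.2 j) then (p : ℝ) ^ (m + 1) else 0) +
          ((d * K : ℝ) ^ m * (p : ℝ) ^ m) := by
    intro kl _
    split_ifs with hc
    · refine le_add_of_le_of_nonneg ?_ (by positivity)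
      refine (norm_sum_le _ _).trans ?_
      simp [ZMod.card]
    · rw [zero_add]
      push Not at hc
      exact_mod_cast pair_bound p hd h a ha ν K hν kl.1 kl.2 hc
  refine (Finset.sum_le_sum h4).trans ?_
  rw [Finset.sum_add_distrib, ← Finset.sum_filter, Finset.sum_const, Finset.sum_const,
    nsmul_eq_mul, nsmul_eq_mul]
  refine add_le_add ?_ ?_
  · gcongr
    exact_mod_cast pairs_card ν K
  · apply le_of_eq
    congr 1
    simp [two_mul, pow_add]


lemma shift_bound (g : ℕ → ℂ) (hg : ∀ n, ‖g n‖ ≤ 1) (N k : ℕ) :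
    ‖∑ n ∈ Finset.range N, g n - ∑ n ∈ Finset.range N, g (n + k)‖ ≤ 2 * k := by
  induction k with
  | zero => simp
  | succ k ih =>
    have h1 : ∑ n ∈ Finset.range N, g (n + k) - ∑ n ∈ Finset.range N, g (n + (k + 1))
        = g k - g (N + k) := by
      have h2 := Finset.sum_range_succ (fun n => g (n + k)) N
      have h3 := Finset.sum_range_succ' (fun n => g (n + k)) N
      rw [h2] at h3
      have h4 : ∑ n ∈ Finset.range N, g (n + (k + 1)) = ∑ n ∈ Finset.range N, g (n + 1 + k) :=
        Finset.sum_congr rfl fun n _ => by congr 1; ring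
      rw [h4]
      simp only [zero_add] at h3
      linear_combination h3
    have h5 : ∑ n ∈ Finset.range N, g n - ∑ n ∈ Finset.range N, g (n + (k + 1)) =
        (∑ n ∈ Finset.range N, g n - ∑ n ∈ Finset.range N, g (n + k)) + (g k - g (N + k)) := by
      rw [← h1]; ring
    rw [h5]
    refine (norm_add_le _ _).trans ?_
    have h6 := norm_sub_le (g k) (g (N + k))
    have h7 := hg k
    have h8 := hg (N + k)
    push_cast
    linarith

lemma shift_avg (g : ℕ → ℂ) (hg : ∀ n, ‖g n‖ ≤ 1) (N K : ℕ) :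
    K * ‖∑ n ∈ Finset.range N, g n‖ ≤ 2 * (K : ℝ) ^ 2 +
      ∑ n ∈ Finset.range N, ‖∑ k : Fin K, g (n + k)‖ := by
  have h1 : (K : ℂ) * ∑ n ∈ Finset.range N, g n =
      ∑ k : Fin K, (∑ n ∈ Finset.range N, g n - ∑ n ∈ Finset.range N, g (n + k)) +
        ∑ n ∈ Finset.range N, ∑ k : Fin K, g (n + k) := by
    rw [Finset.sum_comm (s := Finset.range N), ← Finset.sum_add_distrib]
    simp
  have h2 : K * ‖∑ n ∈ Finset.range N, g n‖ = ‖(K : ℂ) * ∑ n ∈ Finset.range N, g n‖ := by simp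
  rw [h2, h1]
  refine (norm_add_le _ _).trans (add_le_add ?_ (norm_sum_le _ _))
  refine (norm_sum_le _ _).trans ?_
  calc ∑ k : Fin K, ‖∑ n ∈ Finset.range N, g n - ∑ n ∈ Finset.range N, g (n + k)‖
      ≤ ∑ k : Fin K, 2 * (K : ℝ) := by
        refine Finset.sum_le_sum fun k _ => (shift_bound g hg N k).trans ?_
        have : (k : ℝ) ≤ K := by exact_mod_cast k.2.le
        linarith
    _ = _ := by simp; ring

lemma u_inj {α : Type*} (u : ℕ → α) (Φ : α → α) (τ : ℕ) (hu : ∀ n, u (n + 1) = Φ (u n))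
    (hper : ∀ n, u (n + τ) = u n)
    (hmin : ∀ t, 0 < t → (∀ n, u (n + t) = u n) → τ ≤ t) :
    ∀ x y, x < τ → y < τ → u x = u y → x = y := by
  have key : ∀ x y, x < y → y < τ → u x ≠ u y := by
    intro x y hxy hy he
    have h1 : ∀ n, u (x + n) = u (y + n) := by
      intro n
      induction n with
      | zero => exact he
      | succ n ih => rw [← add_assoc, ← add_assoc, hu, hu, ih]
    have h2 : ∀ n, u (n + (y - x)) = u n := by
      intro n
      have := h1 (n + (τ - x))
      rw [show x + (n + (τ - x)) = n + τ by omega,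
        show y + (n + (τ - x)) = n + (y - x) + τ by omega, hper, hper] at this
      exact this.symm
    have := hmin (y - x) (by omega) h2
    omega
  intro x y hx hy he
  rcases lt_trichotomy x y with h | h | h
  · exact absurd he (key x y h hy)
  · exact h
  · exact absurd he.symm (key y x h hx)

/-- exponent-normalised bound -/
noncomputable def DD (m ν p N : ℕ) : ℝ :=
  (p : ℝ) ^ (((m : ℝ) ^ 2 + (m : ℝ) * (ν : ℝ) + (m : ℝ)) /
      (2 * (ν : ℝ) * ((m : ℝ) + (ν : ℝ)))) * (N : ℝ) ^ (-(1 : ℝ) / (2 * (ν : ℝ)))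

/-- the power of p -/
noncomputable def PP (m ν p : ℕ) : ℝ :=
  (p : ℝ) ^ (((m : ℝ) ^ 2 + (m : ℝ) * (ν : ℝ) + (m : ℝ)) / ((m : ℝ) + (ν : ℝ)))

lemma DD_pos (m ν p N : ℕ) (hp : 0 < p) (hN : 0 < N) : 0 < DD m ν p N := by
  unfold DD; positivity

lemma DD_pow (m ν p N : ℕ) (hν : 1 ≤ ν) (hN : 0 < N) :
    DD m ν p N ^ (2 * ν) * N = PP m ν p := by
  have hN' : (0 : ℝ) < N := by exact_mod_cast hN
  have hν' : (0 : ℝ) < ν := by exact_mod_cast hν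
  unfold DD PP
  rw [mul_pow, ← Real.rpow_mul_natCast (by positivity), ← Real.rpow_mul_natCast (by positivity)]
  have h1 : -(1 : ℝ) / (2 * ν) * ((2 * ν : ℕ) : ℝ) = -1 := by
    push_cast; field_simp
  have h2 : ((m : ℝ) ^ 2 + (m : ℝ) * (ν : ℝ) + (m : ℝ)) / (2 * (ν : ℝ) * ((m : ℝ) + (ν : ℝ))) *
      ((2 * ν : ℕ) : ℝ) = ((m : ℝ) ^ 2 + (m : ℝ) * (ν : ℝ) + (m : ℝ)) / ((m : ℝ) + (ν : ℝ)) := by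
    push_cast; field_simp
  rw [h1, h2, Real.rpow_neg_one, mul_assoc, inv_mul_cancel₀ hN'.ne', mul_one]

lemma PP_ge (m ν p : ℕ) (hm : 1 ≤ m) (hp : 1 ≤ p) : (p : ℝ) ≤ PP m ν p := by
  have hp' : (1 : ℝ) ≤ p := by exact_mod_cast hp
  have hm' : (1 : ℝ) ≤ m := by exact_mod_cast hm
  have hν' : (0 : ℝ) ≤ ν := by positivity
  unfold PP
  calc (p : ℝ) = (p : ℝ) ^ (1 : ℝ) := by simp
    _ ≤ _ := by
      apply Real.rpow_le_rpow_of_exponent_le hp'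
      rw [le_div_iff₀ (by positivity)]
      nlinarith

lemma PP_mul (m ν p : ℕ) (hm : 1 ≤ m) (hp : 1 ≤ p) :
    PP m ν p * ((p : ℝ) ^ ((1 : ℝ) / (m + ν))) ^ ν = (p : ℝ) ^ (m + 1) := by
  have hp' : (0 : ℝ) < p := by exact_mod_cast hp
  have hm' : (1 : ℝ) ≤ m := by exact_mod_cast hm
  unfold PP
  rw [← Real.rpow_mul_natCast hp'.le, ← Real.rpow_add hp', ← Real.rpow_natCast (p : ℝ)]
  congr 1
  push_cast; field_simp; ring

lemma expsum_bound (p : ℕ) [Fact p.Prime] {m : ℕ} (hm : 1 ≤ m) {s : ℕ → ℕ → ℕ} {d : ℕ} (hd : 1 ≤ d)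
    {F G H : Fin (m + 1) → MvPolynomial (Fin (m + 1)) (ZMod p)} (h : SysData_s4 m s d F G H)
    (a : Fin m → ZMod p) (ha : a ≠ 0) (ν : ℕ) (hν1 : 1 ≤ ν) (hν : ν < p)
    (u : ℕ → Fin (m + 1) → ZMod p) (τ : ℕ)
    (hu : ∀ n i, u (n + 1) i = MvPolynomial.eval (u n) (F i))
    (hper : ∀ n, u (n + τ) = u n)
    (hmin : ∀ t, 0 < t → (∀ n, u (n + t) = u n) → τ ≤ t) (N : ℕ) (hN : 0 < N) (hNτ : N ≤ τ) :
    ‖∑ n ∈ Finset.range N, psi p (∑ i, a i * u n i.castSucc)‖ ≤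
      (2 + 2 ^ ν * ((ν : ℝ) ^ ν + (d : ℝ) ^ m)) * (N * DD m ν p N) := by
  have hp1 : 1 ≤ p := (Fact.out : p.Prime).one_le
  have hp' : (1 : ℝ) ≤ p := by exact_mod_cast hp1
  have hN' : (1 : ℝ) ≤ N := by exact_mod_cast hN
  have hν' : (1 : ℝ) ≤ ν := by exact_mod_cast hν1
  have hm' : (1 : ℝ) ≤ m := by exact_mod_cast hm
  have hd' : (1 : ℝ) ≤ d := by exact_mod_cast hd
  set D := DD m ν p N with hDdef
  have hD : 0 < D := DD_pos m ν p N hp1 hN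
  have hDP := DD_pow m ν p N hν1 hN
  set P := PP m ν p with hPdef
  have hPp := PP_ge m ν p hm hp1
  have hPx := PP_mul m ν p hm hp1
  rw [← hPdef] at hPp hPx
  rw [← hDdef] at hDP
  set A : ℝ := (ν : ℝ) ^ ν + (d : ℝ) ^ m with hA
  have hA1 : 1 ≤ A := by
    have h1 : (1 : ℝ) ≤ (ν : ℝ) ^ ν := one_le_pow₀ hν'
    have h2 : (0 : ℝ) ≤ (d : ℝ) ^ m := by positivity
    linarith
  set x : ℝ := (p : ℝ) ^ ((1 : ℝ) / (m + ν)) with hx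
  have hx1 : 1 ≤ x := Real.one_le_rpow hp' (by positivity)
  have hxp : x ^ (m + ν) = p := by
    rw [hx, ← Real.rpow_natCast, ← Real.rpow_mul (by positivity)]
    push_cast
    rw [one_div, inv_mul_cancel₀ (by positivity), Real.rpow_one]
  set g : ℕ → ℂ := fun n => psi p (∑ i, a i * u n i.castSucc) with hg
  have hgn : ∀ n, ‖g n‖ ≤ 1 := fun n => (psi_norm p _).le
  by_cases hD1 : 1 ≤ D
  · have h1 : ‖∑ n ∈ Finset.range N, g n‖ ≤ N := by
      refine (norm_sum_le _ _).trans ((Finset.sum_le_sum fun n _ => hgn n).trans ?_)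
      simp
    refine h1.trans ?_
    have h2 : (N : ℝ) ≤ N * D := le_mul_of_one_le_right (by positivity) hD1
    refine h2.trans (le_mul_of_one_le_left (by positivity) ?_)
    have : 0 ≤ 2 ^ ν * A := by positivity
    linarith
  push Not at hD1
  have hNp : (p : ℝ) ≤ N := by
    have h1 : D ^ (2 * ν) ≤ 1 := pow_le_one₀ hD.le hD1.le
    nlinarith
  set K : ℕ := ⌊x⌋₊ with hK
  have hKx : (K : ℝ) ≤ x := Nat.floor_le (by linarith)
  have hK1 : 1 ≤ K := by rw [hK]; exact Nat.le_floor (by simpa using hx1)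
  have hK1' : (1 : ℝ) ≤ K := by exact_mod_cast hK1
  have hxK : x ≤ 2 * K := by
    have := Nat.lt_floor_add_one x
    rw [← hK] at this
    linarith
  have hKp : (K : ℝ) ≤ p := by
    rw [← hxp]
    exact hKx.trans (le_self_pow₀ hx1 (by omega))
  -- moments
  set Y : ℝ := ∑ n ∈ Finset.range N, ‖∑ k : Fin K, g (n + k)‖ with hY
  have hgk : ∀ n k, g (n + k) = psi p (eval (u n) (Pk m F a k)) := by
    intro n k
    simp only [hg, Pk, map_sum, map_mul, eval_C]
    congr 1
    refine Finset.sum_congr rfl fun i _ => ?_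
    rw [eval_It m F u hu]
  have hinj := u_inj u (fun w i => eval w (F i)) τ (fun n => funext (hu n)) hper hmin
  have hV := moment_bound p hd h a ha ν K hν
  set V := ∑ w, ‖∑ k : Fin K, psi p (eval w (Pk m F a k))‖ ^ (2 * ν) with hVdef
  have hYV : Y ^ (2 * ν) ≤ (N : ℝ) ^ (2 * ν - 1) * V := by
    have h1 := pow_sum_le_card_mul_sum_pow (s := Finset.range N)
      (f := fun n => ‖∑ k : Fin K, g (n + k)‖) (fun n _ => norm_nonneg _) (2 * ν - 1)
    rw [show 2 * ν - 1 + 1 = 2 * ν by omega, Finset.card_range] at h1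
    refine h1.trans (mul_le_mul_of_nonneg_left ?_ (by positivity))
    simp only [hgk]
    rw [← Finset.sum_image (s := Finset.range N) (g := u)
      (f := fun w => ‖∑ k : Fin K, psi p (eval w (Pk m F a k))‖ ^ (2 * ν))]
    · exact Finset.sum_le_sum_of_subset_of_nonneg (Finset.subset_univ _)
        (fun _ _ _ => by positivity)
    · intro x hx y hy hxy
      simp only [Finset.coe_range, Set.mem_Iio] at hx hy
      exact hinj x y (by omega) (by omega) hxy
  have hV2 : V ≤ A * (K : ℝ) ^ ν * (p : ℝ) ^ (m + 1) := by
    refine hV.trans ?_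
    have h1 : (K : ℝ) ^ (m + ν) ≤ p := by rw [← hxp]; gcongr
    have h2 : (K : ℝ) ^ (2 * ν) * ((d * K : ℝ) ^ m * (p : ℝ) ^ m) =
        (d : ℝ) ^ m * (K : ℝ) ^ ν * (p : ℝ) ^ m * (K : ℝ) ^ (m + ν) := by ring
    have h3 : (d : ℝ) ^ m * (K : ℝ) ^ ν * (p : ℝ) ^ m * (K : ℝ) ^ (m + ν) ≤
        (d : ℝ) ^ m * (K : ℝ) ^ ν * (p : ℝ) ^ m * p := by gcongr
    rw [h2, hA]
    refine (add_le_add le_rfl h3).trans (le_of_eq ?_)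
    ring
  have hY0 : 0 ≤ Y := Finset.sum_nonneg fun _ _ => norm_nonneg _
  have hNpow : (N : ℝ) ^ (2 * ν) = (N : ℝ) ^ (2 * ν - 1) * N := by
    rw [← pow_succ]; congr 1; omega
  have hYb : Y ≤ 2 ^ ν * A * K * (N * D) := by
    refine le_of_pow_le_pow_left₀ (n := 2 * ν) (by omega) (by positivity) ?_
    calc Y ^ (2 * ν) ≤ (N : ℝ) ^ (2 * ν - 1) * V := hYV
      _ ≤ (N : ℝ) ^ (2 * ν - 1) * (A * (K : ℝ) ^ ν * (P * x ^ ν)) := by rw [hPx]; gcongr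
      _ ≤ (N : ℝ) ^ (2 * ν - 1) * (A * (K : ℝ) ^ ν * (P * (2 * K) ^ ν)) := by
          have : 0 ≤ P := by linarith
          gcongr
      _ = (2 ^ ν * A) * ((K : ℝ) ^ (2 * ν) * (N ^ (2 * ν) * D ^ (2 * ν))) := by
          rw [← hDP, hNpow]; ring
      _ ≤ (2 ^ ν * A) ^ (2 * ν) * ((K : ℝ) ^ (2 * ν) * (N ^ (2 * ν) * D ^ (2 * ν))) := by
          gcongr
          refine le_self_pow₀ ?_ (by omega)
          have : (1 : ℝ) ≤ 2 ^ ν := one_le_pow₀ (by norm_num)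
          nlinarith
      _ = _ := by ring_nf
  have hKb : (K : ℝ) ≤ N * D := by
    refine le_of_pow_le_pow_left₀ (n := 2 * ν) (by omega) (by positivity) ?_
    calc (K : ℝ) ^ (2 * ν) ≤ (p : ℝ) ^ (2 * ν) := by gcongr
      _ = (p : ℝ) ^ (2 * ν - 1) * p := by rw [← pow_succ]; congr 1; omega
      _ ≤ (N : ℝ) ^ (2 * ν - 1) * P := by gcongr
      _ = _ := by rw [← hDP, mul_pow, hNpow]; ring
  have hS := shift_avg g hgn N K
  rw [← hY] at hS
  have hKpos : (0 : ℝ) < K := by linarith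
  refine le_of_mul_le_mul_left (a := (K : ℝ)) ?_ hKpos
  calc (K : ℝ) * ‖∑ n ∈ Finset.range N, g n‖ ≤ 2 * (K : ℝ) ^ 2 + Y := hS
    _ ≤ 2 * (K * (N * D)) + 2 ^ ν * A * K * (N * D) := by
        refine add_le_add ?_ hYb
        rw [pow_two]; gcongr
    _ = _ := by ring


lemma sum_zmod_val (p : ℕ) [NeZero p] {M : Type*} [AddCommMonoid M] (f : ℕ → M) :
    ∑ t : ZMod p, f t.val = ∑ v ∈ Finset.range p, f v := by
  refine Finset.sum_bij' (fun t _ => t.val) (fun v _ => (v : ZMod p)) ?_ ?_ ?_ ?_ ?_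
  · intro t _; exact Finset.mem_range.mpr (ZMod.val_lt t)
  · intro v _; exact Finset.mem_univ _
  · intro t _; simp
  · intro v hv; exact ZMod.val_cast_of_lt (Finset.mem_range.mp hv)
  · intro t _; rfl

lemma psi_sub_one (p : ℕ) [NeZero p] (t : ZMod p) :
    ‖psi p t - 1‖ = 2 * Real.sin (Real.pi * t.val / p) := by
  have hp : (0 : ℝ) < p := by exact_mod_cast Nat.pos_of_ne_zero (NeZero.ne p)
  have hv : (t.val : ℝ) ≤ p := by exact_mod_cast (ZMod.val_lt t).le
  have h1 : psi p t = Complex.exp (Complex.I * ((2 * Real.pi * t.val / p : ℝ) : ℂ)) := by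
    have := ZMod.stdAddChar_coe (N := p) (t.val : ℤ)
    have ht : ((t.val : ℤ) : ZMod p) = t := by
      rw [Int.cast_natCast]; exact ZMod.natCast_zmod_val t
    rw [ht] at this
    rw [psi, this]
    congr 1
    push_cast
    ring
  rw [h1, Complex.norm_exp_I_mul_ofReal_sub_one, Real.norm_eq_abs]
  have h2 : 2 * Real.pi * t.val / p / 2 = Real.pi * t.val / p := by ring
  rw [h2, abs_of_nonneg]
  have : 0 ≤ Real.sin (Real.pi * t.val / p) := by
    apply Real.sin_nonneg_of_nonneg_of_le_pi (by positivity)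
    rw [div_le_iff₀ hp]
    have := Real.pi_pos
    nlinarith
  linarith

lemma sin_lower (p v : ℕ) (hv : 0 < v) (hvp : v < p) :
    (1 : ℝ) / Real.sin (Real.pi * v / p) ≤ (p / 2) * ((1 : ℝ) / v + 1 / ((p - v : ℕ) : ℝ)) := by
  have hp : (0 : ℝ) < p := by exact_mod_cast (by omega : 0 < p)
  have hv' : (0 : ℝ) < v := by exact_mod_cast hv
  have hw : (0 : ℝ) < ((p - v : ℕ) : ℝ) := by exact_mod_cast (by omega : 0 < p - v)
  have hwe : ((p - v : ℕ) : ℝ) = p - v := by rw [Nat.cast_sub hvp.le]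
  have key : ∀ y : ℝ, 0 < y → 2 * y ≤ p → 1 / Real.sin (Real.pi * y / p) ≤ (p / 2) * (1 / y) := by
    intro y hy hyp
    have h1 : 2 / Real.pi * (Real.pi * y / p) ≤ Real.sin (Real.pi * y / p) := by
      apply Real.mul_le_sin (by positivity)
      rw [div_le_div_iff₀ hp (by norm_num)]
      have := Real.pi_pos
      nlinarith
    have h2 : 2 / Real.pi * (Real.pi * y / p) = 2 * y / p := by
      have := Real.pi_pos.ne'
      field_simp
    rw [h2] at h1
    calc 1 / Real.sin (Real.pi * y / p) ≤ 1 / (2 * y / p) := by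
          apply one_div_le_one_div_of_le (by positivity) h1
      _ = _ := by field_simp
  rcases le_total (2 * (v : ℝ)) p with hle | hle
  · refine (key v hv' hle).trans ?_
    have : 0 ≤ 1 / ((p - v : ℕ) : ℝ) := by positivity
    gcongr; linarith
  · have h3 : Real.sin (Real.pi * v / p) = Real.sin (Real.pi * ((p - v : ℕ) : ℝ) / p) := by
      rw [← Real.sin_pi_sub, hwe]
      congr 1
      field_simp
    rw [h3]
    refine (key _ hw (by rw [hwe]; linarith)).trans ?_
    have : 0 ≤ 1 / (v : ℝ) := by positivity
    gcongr; linarith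

/-- Fourier coefficient of an interval. -/
noncomputable def ft (p : ℕ) [NeZero p] (A B : ℕ) (t : ZMod p) : ℂ :=
  ∑ n ∈ Finset.Ico A B, psi p (-(t * (n : ZMod p)))

lemma ft_le (p : ℕ) [Fact p.Prime] (A B : ℕ) (hAB : A ≤ B) (hB : B ≤ p) (t : ZMod p) :
    ‖ft p A B t‖ ≤ if t.val = 0 then (p : ℝ) else
      (p / 2) * ((1 : ℝ) / t.val + 1 / ((p - t.val : ℕ) : ℝ)) := by
  split_ifs with ht
  · refine (norm_sum_le _ _).trans ?_
    simp only [psi_norm]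
    simp only [Finset.sum_const, Nat.card_Ico, nsmul_eq_mul, mul_one]
    exact_mod_cast (by omega : B - A ≤ p)
  · have hlt := ZMod.val_lt t
    refine le_trans ?_ (sin_lower p t.val (by omega) hlt)
    set z : ℂ := psi p (-t) with hz
    have hzn : ‖z‖ = 1 := psi_norm p _
    have hsum : ft p A B t = ∑ n ∈ Finset.Ico A B, z ^ n := by
      refine Finset.sum_congr rfl fun n _ => ?_
      rw [hz, ← AddChar.map_nsmul_eq_pow]
      congr 1
      simp [mul_comm]
    have hnorm : ‖z - 1‖ = 2 * Real.sin (Real.pi * t.val / p) := by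
      rw [← psi_sub_one, hz, ← psi_conj, ← RCLike.norm_conj]
      simp
    have hsinpos : 0 < Real.sin (Real.pi * t.val / p) := by
      have hp : (0 : ℝ) < p := by exact_mod_cast (Fact.out : p.Prime).pos
      have h0 : (0 : ℝ) < t.val := by exact_mod_cast (by omega : 0 < t.val)
      have h1 : (t.val : ℝ) < p := by exact_mod_cast hlt
      apply Real.sin_pos_of_pos_of_lt_pi
      · have := Real.pi_pos; positivity
      · rw [div_lt_iff₀ hp]
        have := Real.pi_pos
        nlinarith
    have hz1 : z ≠ 1 := by
      intro h0
      rw [h0, sub_self, norm_zero] at hnorm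
      linarith
    rw [hsum, geom_sum_Ico hz1 hAB, norm_div, hnorm, div_le_div_iff₀ (by positivity) hsinpos]
    have : ‖z ^ B - z ^ A‖ ≤ 2 := by
      refine (norm_sub_le _ _).trans ?_
      rw [norm_pow, norm_pow, hzn]; norm_num
    nlinarith

lemma ft_sum (p : ℕ) [Fact p.Prime] (A B : ℕ) (hAB : A ≤ B) (hB : B ≤ p) :
    ∑ t, ‖ft p A B t‖ ≤ p * (2 + Real.log p) := by
  have hp1 : 1 ≤ p := (Fact.out : p.Prime).one_le
  have hp : (0 : ℝ) < p := by exact_mod_cast hp1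
  refine (Finset.sum_le_sum fun t _ => ft_le p A B hAB hB t).trans ?_
  rw [sum_zmod_val p (fun v => if v = 0 then (p : ℝ) else
      (p / 2) * ((1 : ℝ) / v + 1 / ((p - v : ℕ) : ℝ)))]
  obtain ⟨q, rfl⟩ : ∃ q, p = q + 1 := ⟨p - 1, by omega⟩
  rw [Finset.sum_range_succ']
  simp only [Nat.add_eq_zero_iff, one_ne_zero, and_false, if_false, if_true]
  have h1 : ∑ k ∈ Finset.range q, ((q + 1 : ℕ) / 2 : ℝ) * (1 / ((k + 1 : ℕ) : ℝ) +
      1 / ((q + 1 - (k + 1) : ℕ) : ℝ)) = (q + 1 : ℕ) * (harmonic q : ℝ) := by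
    rw [← Finset.mul_sum, Finset.sum_add_distrib]
    have h2 : ∑ k ∈ Finset.range q, 1 / ((q + 1 - (k + 1) : ℕ) : ℝ) =
        ∑ k ∈ Finset.range q, 1 / ((k + 1 : ℕ) : ℝ) := by
      rw [← Finset.sum_range_reflect (fun k => 1 / ((k + 1 : ℕ) : ℝ))]
      refine Finset.sum_congr rfl fun k hk => ?_
      have := Finset.mem_range.mp hk
      congr 2
      omega
    rw [h2, harmonic]
    push_cast
    simp only [one_div]
    ring
  rw [h1]
  have h3 : (harmonic q : ℝ) ≤ 1 + Real.log (q + 1 : ℕ) := by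
    refine (harmonic_le_one_add_log q).trans ?_
    rcases Nat.eq_zero_or_pos q with rfl | hq
    · simp
    · have hq' : (0 : ℝ) < q := by exact_mod_cast hq
      have := Real.log_le_log hq' (by push_cast; linarith : (q : ℝ) ≤ (q + 1 : ℕ))
      linarith
  nlinarith

lemma indicator_eq (p : ℕ) [Fact p.Prime] (A B : ℕ) (hB : B ≤ p) (y : ZMod p) :
    (if A ≤ y.val ∧ y.val < B then (1 : ℂ) else 0) =
      (1 / p : ℂ) * ∑ t, ft p A B t * psi p (t * y) := by
  have hp : (p : ℂ) ≠ 0 := by exact_mod_cast (Fact.out : p.Prime).ne_zero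
  have h1 : ∑ t, ft p A B t * psi p (t * y) =
      ∑ n ∈ Finset.Ico A B, if n = y.val then (p : ℂ) else 0 := by
    simp only [ft, Finset.sum_mul]
    rw [Finset.sum_comm]
    refine Finset.sum_congr rfl fun n hn => ?_
    have h2 : ∀ t, psi p (-(t * (n : ZMod p))) * psi p (t * y) = psi p (t * (y - n)) := by
      intro t
      rw [← AddChar.map_add_eq_mul]; congr 1; ring
    simp only [h2, psi_sum]
    have hnp : n < p := lt_of_lt_of_le (Finset.mem_Ico.mp hn).2 hB
    have h3 : y - (n : ZMod p) = 0 ↔ n = y.val := by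
      rw [sub_eq_zero]
      constructor
      · intro h; rw [h, ZMod.val_cast_of_lt hnp]
      · intro h; rw [h]; simp
    simp only [h3]
  rw [h1, Finset.sum_ite_eq' (Finset.Ico A B) y.val]
  simp only [Finset.mem_Ico]
  split_ifs
  · field_simp
  · simp

lemma count_bound (p : ℕ) [Fact p.Prime] (m N : ℕ) (x : ℕ → Fin m → ZMod p) (M : ℝ) (hM0 : 0 ≤ M)
    (hM : ∀ a : Fin m → ZMod p, a ≠ 0 →
      ‖∑ n ∈ Finset.range N, psi p (∑ i, a i * x n i)‖ ≤ M)
    (A B : Fin m → ℕ) (hAB : ∀ j, A j ≤ B j) (hB : ∀ j, B j ≤ p) :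
    |(((Finset.range N).filter fun n => ∀ j, A j ≤ (x n j).val ∧ (x n j).val < B j).card : ℝ) -
      N * ∏ j, (((B j : ℝ) - A j) / p)| ≤ M * (2 + Real.log p) ^ m := by
  classical
  have hp : (0 : ℝ) < p := by exact_mod_cast (Fact.out : p.Prime).pos
  have hT : ((((Finset.range N).filter
      fun n => ∀ j, A j ≤ (x n j).val ∧ (x n j).val < B j).card : ℝ) : ℂ) =
      (1 / p : ℂ) ^ m * ∑ a : Fin m → ZMod p, (∏ j, ft p (A j) (B j) (a j)) *
        ∑ n ∈ Finset.range N, psi p (∑ i, a i * x n i) := by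
    rw [Complex.ofReal_natCast, Finset.card_filter]
    simp only [Nat.cast_sum, Nat.cast_ite, Nat.cast_one, Nat.cast_zero]
    have h1 : ∀ n, (if ∀ j, A j ≤ (x n j).val ∧ (x n j).val < B j then (1 : ℂ) else 0) =
        (1 / p : ℂ) ^ m * ∑ a : Fin m → ZMod p, (∏ j, ft p (A j) (B j) (a j)) *
          psi p (∑ i, a i * x n i) := by
      intro n
      have h2 : (if ∀ j, A j ≤ (x n j).val ∧ (x n j).val < B j then (1 : ℂ) else 0) =
          ∏ j, if A j ≤ (x n j).val ∧ (x n j).val < B j then (1 : ℂ) else 0 := by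
        rw [Finset.prod_ite_zero]; simp
      rw [h2, Finset.prod_congr rfl fun j _ => indicator_eq p (A j) (B j) (hB j) (x n j),
        Finset.prod_mul_distrib, Finset.prod_const, Finset.prod_univ_sum]
      simp only [Finset.card_univ, Fintype.card_fin, Fintype.piFinset_univ,
        Finset.prod_mul_distrib, psi_map_sum]
    rw [Finset.sum_congr rfl fun n _ => h1 n, ← Finset.mul_sum, Finset.sum_comm]
    congr 1
    exact Finset.sum_congr rfl fun a _ => by rw [Finset.mul_sum]
  have h0 : (∏ j, ft p (A j) (B j) ((0 : Fin m → ZMod p) j)) *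
        ∑ n ∈ Finset.range N, psi p (∑ i, (0 : Fin m → ZMod p) i * x n i) =
        (N : ℂ) * ∏ j, ((B j : ℂ) - A j) := by
    simp only [Pi.zero_apply, zero_mul, Finset.sum_const_zero, AddChar.map_zero_eq_one, ft, neg_zero,
      Finset.sum_const, Finset.card_range, Nat.card_Ico, nsmul_eq_mul, mul_one]
    rw [mul_comm]
    congr 1
    exact Finset.prod_congr rfl fun j _ => by rw [Nat.cast_sub (hAB j)]
  have hdiff : (((((Finset.range N).filter
      fun n => ∀ j, A j ≤ (x n j).val ∧ (x n j).val < B j).card : ℝ) -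
      N * ∏ j, (((B j : ℝ) - A j) / p) : ℝ) : ℂ) =
      (1 / p : ℂ) ^ m * ∑ a ∈ (Finset.univ : Finset (Fin m → ZMod p)).erase 0,
        (∏ j, ft p (A j) (B j) (a j)) *
        ∑ n ∈ Finset.range N, psi p (∑ i, a i * x n i) := by
    rw [Complex.ofReal_sub, hT, ← Finset.add_sum_erase _ _ (Finset.mem_univ (0 : Fin m → ZMod p)),
      h0, Finset.prod_div_distrib]
    push_cast
    simp only [Finset.prod_const, Finset.card_univ, Fintype.card_fin]
    ring
  rw [← Real.norm_eq_abs, ← Complex.norm_real, hdiff, norm_mul]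
  have hW : ‖∑ a ∈ (Finset.univ : Finset (Fin m → ZMod p)).erase 0,
        (∏ j, ft p (A j) (B j) (a j)) *
        ∑ n ∈ Finset.range N, psi p (∑ i, a i * x n i)‖ ≤ (p * (2 + Real.log p)) ^ m * M := by
    calc _ ≤ ∑ a ∈ (Finset.univ : Finset (Fin m → ZMod p)).erase 0,
          (∏ j, ‖ft p (A j) (B j) (a j)‖) * M := by
          refine (norm_sum_le _ _).trans (Finset.sum_le_sum fun a ha => ?_)
          rw [norm_mul, norm_prod]
          exact mul_le_mul_of_nonneg_left (hM a (Finset.ne_of_mem_erase ha))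
            (Finset.prod_nonneg fun _ _ => norm_nonneg _)
      _ ≤ ∑ a : Fin m → ZMod p, (∏ j, ‖ft p (A j) (B j) (a j)‖) * M := by
          refine Finset.sum_le_sum_of_subset_of_nonneg (Finset.erase_subset _ _) fun _ _ _ => ?_
          exact mul_nonneg (Finset.prod_nonneg fun _ _ => norm_nonneg _) hM0
      _ = (∏ j, ∑ t, ‖ft p (A j) (B j) t‖) * M := by
          rw [← Finset.sum_mul, Finset.prod_univ_sum, Fintype.piFinset_univ]
      _ ≤ _ := by
          refine mul_le_mul_of_nonneg_right ?_ hM0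
          calc _ ≤ ∏ j : Fin m, (p * (2 + Real.log p)) :=
                Finset.prod_le_prod (fun _ _ => Finset.sum_nonneg fun _ _ => norm_nonneg _)
                  fun j _ => ft_sum p (A j) (B j) (hAB j) (hB j)
            _ = _ := by simp
  calc _ ≤ ‖(1 / p : ℂ) ^ m‖ * ((p * (2 + Real.log p)) ^ m * M) := by gcongr
    _ = _ := by
      rw [norm_pow, norm_div, norm_one, Complex.norm_natCast, mul_pow, ← mul_assoc, ← mul_assoc,
        ← mul_pow, one_div, inv_mul_cancel₀ hp.ne', one_pow]
      ring

lemma prod_diff {ι : Type*} (t : Finset ι) (y z : ι → ℝ) (δ : ℝ)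
    (hy : ∀ j, 0 ≤ y j ∧ y j ≤ 1) (hz : ∀ j, 0 ≤ z j ∧ z j ≤ 1) (h : ∀ j, |y j - z j| ≤ δ) :
    |∏ j ∈ t, y j - ∏ j ∈ t, z j| ≤ t.card * δ := by
  classical
  induction t using Finset.induction_on with
  | empty => simp
  | insert a t ha ih =>
    rw [Finset.prod_insert ha, Finset.prod_insert ha, Finset.card_insert_of_notMem ha]
    have hz1 : |∏ j ∈ t, z j| ≤ 1 := by
      rw [abs_of_nonneg (Finset.prod_nonneg fun j _ => (hz j).1)]
      exact Finset.prod_le_one (fun j _ => (hz j).1) fun j _ => (hz j).2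
    have hya : |y a| ≤ 1 := by rw [abs_of_nonneg (hy a).1]; exact (hy a).2
    have : y a * ∏ j ∈ t, y j - z a * ∏ j ∈ t, z j =
        y a * (∏ j ∈ t, y j - ∏ j ∈ t, z j) + (y a - z a) * ∏ j ∈ t, z j := by ring
    rw [this]
    refine (abs_add_le _ _).trans ?_
    rw [abs_mul, abs_mul]
    have h1 := mul_le_mul hya ih (abs_nonneg _) zero_le_one
    have h2 := mul_le_mul (h a) hz1 (abs_nonneg _) ((abs_nonneg _).trans (h a))
    push_cast
    linarith

lemma box_bound (p : ℕ) [Fact p.Prime] (m N : ℕ) (hN : 0 < N) (x : ℕ → Fin m → ZMod p)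
    (M : ℝ) (hM0 : 0 ≤ M)
    (hM : ∀ a : Fin m → ZMod p, a ≠ 0 →
      ‖∑ n ∈ Finset.range N, psi p (∑ i, a i * x n i)‖ ≤ N * M)
    (a b : Fin m → ℝ) (hab : ∀ j, 0 ≤ a j ∧ a j ≤ b j ∧ b j ≤ 1) :
    |(((Finset.range N).filter fun n => ∀ j, a j ≤ ((x n j).val : ℝ) / p ∧
      ((x n j).val : ℝ) / p < b j).card : ℝ) / N - ∏ j, (b j - a j)| ≤
      M * (2 + Real.log p) ^ m + m * (1 / p) := by
  have hp : (0 : ℝ) < p := by exact_mod_cast (Fact.out : p.Prime).pos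
  have hN' : (0 : ℝ) < N := by exact_mod_cast hN
  set A : Fin m → ℕ := fun j => ⌈a j * p⌉₊ with hA
  set B : Fin m → ℕ := fun j => ⌈b j * p⌉₊ with hB
  have hAB : ∀ j, A j ≤ B j := fun j => Nat.ceil_le_ceil (by have := (hab j).2.1; gcongr)
  have hBp : ∀ j, B j ≤ p := fun j => Nat.ceil_le.mpr (by have := (hab j).2.2; nlinarith)
  have hfil : ((Finset.range N).filter fun n => ∀ j, a j ≤ ((x n j).val : ℝ) / p ∧
      ((x n j).val : ℝ) / p < b j) =
      (Finset.range N).filter fun n => ∀ j, A j ≤ (x n j).val ∧ (x n j).val < B j := by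
    refine Finset.filter_congr fun n _ => forall_congr' fun j => ?_
    rw [hA, hB, Nat.ceil_le, Nat.lt_ceil, le_div_iff₀ hp, div_lt_iff₀ hp]
  rw [hfil]
  have hc := count_bound p m N x (N * M) (by positivity) hM A B hAB hBp
  set T : ℝ := (((Finset.range N).filter
    fun n => ∀ j, A j ≤ (x n j).val ∧ (x n j).val < B j).card : ℝ) with hT
  set Q1 : ℝ := ∏ j, (((B j : ℝ) - A j) / p) with hQ1
  have h1 : |T / N - Q1| ≤ M * (2 + Real.log p) ^ m := by
    have : T / N - Q1 = (T - N * Q1) / N := by field_simp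
    rw [this, abs_div, abs_of_pos hN', div_le_iff₀ hN']
    linarith
  have h2 : |Q1 - ∏ j, (b j - a j)| ≤ m * (1 / p) := by
    have := prod_diff Finset.univ (fun j => ((B j : ℝ) - A j) / p) (fun j => b j - a j) (1 / p)
      ?_ ?_ ?_
    · simp only [Finset.card_univ, Fintype.card_fin] at this
      exact this
    · intro j
      have hh1 : (A j : ℝ) ≤ B j := by exact_mod_cast hAB j
      have hh2 : (B j : ℝ) ≤ p := by exact_mod_cast hBp j
      have hh3 : (0 : ℝ) ≤ A j := by positivity
      constructor
      · apply div_nonneg <;> linarith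
      · rw [div_le_one hp]; linarith
    · intro j
      obtain ⟨q1, q2, q3⟩ := hab j
      constructor <;> linarith
    · intro j
      obtain ⟨q1, q2, q3⟩ := hab j
      have e1 : a j * p ≤ A j := Nat.le_ceil _
      have e2 : (A j : ℝ) < a j * p + 1 := Nat.ceil_lt_add_one (by positivity)
      have e3 : b j * p ≤ B j := Nat.le_ceil _
      have e4 : (B j : ℝ) < b j * p + 1 := Nat.ceil_lt_add_one (mul_nonneg (by linarith) hp.le)
      have : ((B j : ℝ) - A j) / p - (b j - a j) = ((B j - b j * p) - (A j - a j * p)) / p := by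
        field_simp; ring
      rw [this, abs_div, abs_of_pos hp]
      gcongr
      rw [abs_le]; constructor <;> linarith
  calc |T / N - ∏ j, (b j - a j)| = |(T / N - Q1) + (Q1 - ∏ j, (b j - a j))| := by ring_nf
    _ ≤ _ := (abs_add_le _ _).trans (add_le_add h1 h2)


lemma card_le (p : ℕ) [Fact p.Prime] (m N : ℕ) (u : ℕ → Fin (m + 1) → ZMod p)
    (h : ∀ x y, x < N → y < N → u x = u y → x = y) : N ≤ p ^ (m + 1) := by
  have h1 : (Finset.range N).card ≤ (Finset.univ : Finset (Fin (m + 1) → ZMod p)).card := by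
    refine Finset.card_le_card_of_injOn u (fun _ _ => Finset.mem_coe.mpr (Finset.mem_univ _)) ?_
    intro x hx y hy hxy
    simp only [Finset.coe_range, Set.mem_Iio] at hx hy
    exact h x y hx hy hxy
  simpa [ZMod.card] using h1

lemma one_le_DD_mul (m ν p N : ℕ) (hm : 1 ≤ m) (hν : 1 ≤ ν) (hp : 1 ≤ p) (hN : 0 < N)
    (hNp : N ≤ p ^ (m + 1)) : 1 ≤ DD m ν p N * p := by
  have hp' : (1 : ℝ) ≤ p := by exact_mod_cast hp
  have hm' : (1 : ℝ) ≤ m := by exact_mod_cast hm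
  have hν' : (1 : ℝ) ≤ ν := by exact_mod_cast hν
  have hN' : (0 : ℝ) < N := by exact_mod_cast hN
  have hD := DD_pos m ν p N hp hN
  set x : ℝ := (p : ℝ) ^ ((1 : ℝ) / (m + ν)) with hx
  have hx0 : 0 ≤ x := by positivity
  have hxp : x ≤ p := by
    calc x ≤ (p : ℝ) ^ (1 : ℝ) := by
          apply Real.rpow_le_rpow_of_exponent_le hp'
          rw [div_le_one (by positivity)]; linarith
      _ = p := Real.rpow_one _
  have h1 := PP_mul m ν p hm hp
  rw [← DD_pow m ν p N hν hN, ← hx] at h1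
  have h2 : (N : ℝ) ≤ (p : ℝ) ^ (m + 1) := by exact_mod_cast hNp
  have h3 : 1 ≤ DD m ν p N ^ (2 * ν) * x ^ ν := by
    rw [← h1] at h2
    by_contra! hlt
    have : DD m ν p N ^ (2 * ν) * N * x ^ ν = N * (DD m ν p N ^ (2 * ν) * x ^ ν) := by ring
    nlinarith
  have h4 : x ^ ν ≤ (p : ℝ) ^ (2 * ν) :=
    (pow_le_pow_left₀ hx0 hxp ν).trans (pow_le_pow_right₀ hp' (by omega))
  have h5 : 1 ≤ (DD m ν p N * p) ^ (2 * ν) := by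
    rw [mul_pow]
    exact h3.trans (mul_le_mul_of_nonneg_left h4 (by positivity))
  by_contra! hlt
  have := pow_lt_one₀ (by positivity) hlt (by omega : 2 * ν ≠ 0)
  linarith

theorem stmt4 (m d ν : ℕ) (hm : 1 ≤ m) (hd : 2 ≤ d) (hν : 1 ≤ ν) :
    ∃ c : ℝ, 0 < c ∧
      ∀ (s : ℕ → ℕ → ℕ) (p : ℕ), p.Prime →
        ∀ F : Fin (m + 1) → MvPolynomial (Fin (m + 1)) (ZMod p),
          IsFSystem m s F →
          (Finset.univ.sup fun i => (F i).totalDegree) = d →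
          (∏ i ∈ Finset.range m, s i (i + 1)) ≠ 0 →
          ∀ (u : ℕ → Fin (m + 1) → ZMod p) (τ : ℕ),
            (∀ n i, u (n + 1) i = MvPolynomial.eval (u n) (F i)) →
            0 < τ → (∀ n, u (n + τ) = u n) →
            (∀ t, 0 < t → (∀ n, u (n + t) = u n) → τ ≤ t) →
            ∀ N : ℕ, 0 < N → N ≤ τ →
              discrepancy m N (fun n j => ((u n j.castSucc).val : ℝ) / (p : ℝ)) ≤
                c * (p : ℝ) ^ (((m : ℝ) ^ 2 + (m : ℝ) * (ν : ℝ) + (m : ℝ)) /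
                      (2 * (ν : ℝ) * ((m : ℝ) + (ν : ℝ)))) *
                  (N : ℝ) ^ (-(1 : ℝ) / (2 * (ν : ℝ))) * (Real.log p) ^ m := by
  set K : ℝ := 2 + 2 ^ ν * ((ν : ℝ) ^ ν + (d : ℝ) ^ m) with hK
  have hK0 : 0 < K := by positivity
  refine ⟨(K + m + ν) * 4 ^ m, by positivity, ?_⟩
  intro s p hp F hF hdeg hs u τ hu hτ hper hmin N hN hNτ
  haveI : Fact p.Prime := ⟨hp⟩
  obtain ⟨G, H, hsys⟩ := sysData_of m d s F hF hdeg hs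
  have hp2 : (2 : ℝ) ≤ p := by exact_mod_cast hp.two_le
  have hp0 : (0 : ℝ) < p := by linarith
  have hN' : (0 : ℝ) < N := by exact_mod_cast hN
  have hinj := u_inj u (fun v i => MvPolynomial.eval v (F i)) τ (fun n => funext fun i => hu n i)
    hper hmin
  have hNp : N ≤ p ^ (m + 1) := card_le p m N u fun x y hx hy =>
    hinj x y (by omega) (by omega)
  have hDp := one_le_DD_mul m ν p N hm hν hp.one_le hN hNp
  have hD := DD_pos m ν p N hp.pos hN
  have hrw : (K + m + ν) * 4 ^ m * (p : ℝ) ^ (((m : ℝ) ^ 2 + (m : ℝ) * (ν : ℝ) + (m : ℝ)) /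
                      (2 * (ν : ℝ) * ((m : ℝ) + (ν : ℝ)))) *
                  (N : ℝ) ^ (-(1 : ℝ) / (2 * (ν : ℝ))) * (Real.log p) ^ m =
      (K + m + ν) * DD m ν p N * (4 * Real.log p) ^ m := by
    rw [mul_pow]; unfold DD; ring
  rw [hrw]
  set D : ℝ := DD m ν p N with hDdef
  have hlog : (0.69 : ℝ) ≤ Real.log p := by
    have h1 := Real.log_two_gt_d9
    have h2 := Real.log_le_log (by norm_num) hp2
    linarith
  set L : ℝ := (4 * Real.log p) ^ m with hL
  have hL1 : 1 ≤ L := one_le_pow₀ (by linarith)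
  have hL2 : (2 + Real.log p) ^ m ≤ L := pow_le_pow_left₀ (by linarith) (by linarith) m
  have hνR : (0 : ℝ) ≤ ν := by positivity
  have hmR : (0 : ℝ) ≤ m := by positivity
  have hDL : D ≤ D * L := by nlinarith
  have hDL0 : 0 ≤ D * L := by positivity
  apply Real.sSup_le _ (by positivity)
  rintro y ⟨a, b, hab, rfl⟩
  rcases lt_or_ge ν p with hνp | hνp
  · have hb := box_bound p m N hN (fun n j => u n j.castSucc) (K * D) (by positivity)
      (fun e he => by
        have := expsum_bound p hm (by omega) hsys e he ν hν hνp u τ hu hper hmin N hN hNτ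
        rw [← hK, ← hDdef] at this
        linarith) a b hab
    refine hb.trans ?_
    have h1 : 1 / (p : ℝ) ≤ D := by rw [div_le_iff₀ hp0]; exact hDp
    have h2 : K * D * (2 + Real.log p) ^ m ≤ K * D * L := by gcongr
    have h3 : (m : ℝ) * (1 / p) ≤ m * (D * L) := by
      apply mul_le_mul_of_nonneg_left _ hmR; linarith
    nlinarith [mul_nonneg hνR hDL0]
  · have hνp' : (p : ℝ) ≤ ν := by exact_mod_cast hνp
    have h1 : (1 : ℝ) ≤ ν * (D * L) := by
      calc (1 : ℝ) ≤ D * p := hDp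
        _ ≤ (D * L) * ν := by gcongr
        _ = _ := by ring
    refine le_trans ?_ (h1.trans (by nlinarith [mul_nonneg hK0.le hDL0, mul_nonneg hmR hDL0]))
    have hP0 : 0 ≤ ∏ j, (b j - a j) := Finset.prod_nonneg fun j _ => by linarith [(hab j).2.1]
    have hP1 : ∏ j, (b j - a j) ≤ 1 := Finset.prod_le_one
      (fun j _ => by linarith [(hab j).2.1]) fun j _ => by linarith [(hab j).1, (hab j).2.2]
    apply abs_sub_le_of_le_of_le (by positivity) _ hP0 hP1 |>.trans
    · norm_num
    · rw [div_le_one hN']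
      have := Finset.card_filter_le (Finset.range N) (fun n => ∀ j : Fin m,
        a j ≤ ((u n j.castSucc).val : ℝ) / (p : ℝ) ∧ ((u n j.castSucc).val : ℝ) / (p : ℝ) < b j)
      rw [Finset.card_range] at this
      exact_mod_cast this
end
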